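/- arXiv:1309.6967 — 3 statements merged into one kernel-verified Lean document; each statement's English description precedes it below -/
import Mathlib

section
/- Let δ > 0. Assume that for every pair of smooth functions (u₀, u₁) on M there exists a smooth function u : [0,∞) × M → ℂ solving the damped wave equation ∂_t²u − Δ_g u + a ∂_t u = 0 with u(0,·) = u₀ and ∂_t u(0,·) = u₁, and assume f : (0,∞) → (0,∞) is a function such that every such solution satisfies E(u)(t) ≤ f(t) · (‖u₀‖²_{H^{1+δ}} + ‖u₁‖²_{H^{δ}}) for all t > 0. Then there exist constants C > 0 and c_δ > 0 such that f(t) ≥ C^{-1} e^{−c_δ √t} for all t > 0. -/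
/-!
The lower bound comes from WKB quasimodes concentrated near the undamped trapped orbit `z = 0`,
on which the damping acts only for a logarithmically small fraction of the time.

For `0 < η ≤ 1` put `w = 1 - R⁻²`, `q = √(η + w)` and `s = √(1 + η)`, and look for an approximate
solution `U = e^{λt} v(z) e^{imθ}` with `λ = i m s - ν` and `v = exp (B + i m ∫ q)`. The terms of
order `m²` in the equation cancel because `s² = q² + R⁻²` (`Geo.eikonal`); those of order `m`
cancel when `b = B'` solves a linear transport equation (`Geo.transport`). The function `B` is
`2π`-periodic exactly when `ν` is half the mean of `a` along the trajectory, weighted by the time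
`dz / q`. The remaining residual does not involve `m` (`mode_residual`) and is bounded by a power
of `1 / η` (`Geo.residual_bound`). Since `∫ dz / q ≥ ½ log (1/η) - O(1)` while `a / q` is bounded,
`ν = O(1 / log (1/η))` (`Geo.rate_log`).

Given a large integer `M`, take `m = M ^ J`; a Bohr–Sommerfeld condition selects `η` between `1 / M`
and `2 / M` for which `v` is periodic (`Geo.quantize`). An exact solution with the same data differs
from `U` by a function whose energy at time `t` is `O(t² M^{O(1)})`, the exponent being independent
of `J` (`energy_est`, `energy_lower`), whereas the kinetic energy of `U` for `t ≤ log² M` is at least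
`M^{2J} e^{-2νt} c² ≥ c² M^{2J - O(1)}`. With `J` large this forces the energy of the exact solution
to be at least `1` up to time `log² M`. All Sobolev norms of the data are polynomial in `M`
(`sobolev_mode`), so `f t ≥ C⁻¹ M^{-K}` (`Geo.lower_bound`), and `M ≈ e^{√t}` gives the claim.
-/

open Real MeasureTheory Filter

noncomputable section

/-- The Laplace–Beltrami operator of the warped-product metric
`g = dz² + R(z)² dθ²`. -/
def lapg (R : ℝ → ℝ) (u : ℝ → ℝ → ℂ) (z θ : ℝ) : ℂ :=
  ((R z : ℂ))⁻¹ * deriv (fun w : ℝ => (R w : ℂ) * deriv (fun w' : ℝ => u w' θ) w) z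
    + (((R z : ℂ)) ^ 2)⁻¹ * deriv (fun p : ℝ => deriv (fun p' : ℝ => u z p') p) θ

/-- Smooth functions on the torus `M`. -/
def Smooth2 (u : ℝ → ℝ → ℂ) : Prop := ContDiff ℝ (⊤ : ℕ∞) (fun p : ℝ × ℝ => u p.1 p.2)

/-- `2π`-periodicity in each variable. -/
def Periodic2 (u : ℝ → ℝ → ℂ) : Prop :=
  ∀ z θ, u (z + 2 * Real.pi) θ = u z θ ∧ u z (θ + 2 * Real.pi) = u z θ

/-- The energy of a time-dependent function on `M`:
`E(u)(t) = ∫∫ (|∂_t u|² + |∂_z u|² + R⁻²|∂_θ u|²) R(z) dz dθ`. -/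
def energy (R : ℝ → ℝ) (u : ℝ → ℝ → ℝ → ℂ) (t : ℝ) : ℝ :=
  ∫ θ in (0:ℝ)..(2 * Real.pi), ∫ z in (0:ℝ)..(2 * Real.pi),
    (‖deriv (fun s : ℝ => u s z θ) t‖ ^ 2 + ‖deriv (fun w : ℝ => u t w θ) z‖ ^ 2
      + ((R z) ^ 2)⁻¹ * ‖deriv (fun p : ℝ => u t z p) θ‖ ^ 2) * R z

/-- Fourier coefficients of a function on the torus `M`:
`v̂(k,m) = (2π)⁻² ∫∫ v(z,θ) e^{−i(kz+mθ)} dz dθ`. -/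
def fcoef (v : ℝ → ℝ → ℂ) (k m : ℤ) : ℂ :=
  ((((2 * Real.pi) ^ 2 : ℝ) : ℂ))⁻¹ *
    ∫ θ in (0:ℝ)..(2 * Real.pi), ∫ z in (0:ℝ)..(2 * Real.pi),
      v z θ * Complex.exp (-Complex.I * ((k : ℂ) * (z : ℂ) + (m : ℂ) * (θ : ℂ)))

/-- Squared Sobolev `H^s` norm on the torus, via Fourier coefficients. -/
def hsNormSq (s : ℝ) (v : ℝ → ℝ → ℂ) : ℝ :=
  ∑' km : ℤ × ℤ, (1 + (km.1 : ℝ) ^ 2 + (km.2 : ℝ) ^ 2) ^ s * ‖fcoef v km.1 km.2‖ ^ 2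

/-- `u` is a smooth solution on `[0,∞) × M` of the damped wave equation
`∂_t²u − Δ_g u + a ∂_t u = 0` with initial data `(u₀, u₁)`. -/
def IsWaveSol (R a : ℝ → ℝ) (u : ℝ → ℝ → ℝ → ℂ) (u₀ u₁ : ℝ → ℝ → ℂ) : Prop :=
  (ContDiff ℝ (⊤ : ℕ∞) (fun p : ℝ × ℝ × ℝ => u p.1 p.2.1 p.2.2)) ∧
  (∀ t z θ, u t (z + 2 * Real.pi) θ = u t z θ ∧ u t z (θ + 2 * Real.pi) = u t z θ) ∧
  (∀ t, 0 ≤ t → ∀ z θ,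
    deriv (fun s : ℝ => deriv (fun s' : ℝ => u s' z θ) s) t
      - lapg R (fun w p => u t w p) z θ
      + (a z : ℂ) * deriv (fun s : ℝ => u s z θ) t = 0) ∧
  (∀ z θ, u 0 z θ = u₀ z θ) ∧
  (∀ z θ, deriv (fun s : ℝ => u s z θ) 0 = u₁ z θ)

/-! ### Partial derivatives of functions of `(t, z, θ)` -/

/-- The pointwise derivative in time. -/
def pt (U : ℝ → ℝ → ℝ → ℂ) (t z θ : ℝ) : ℂ := deriv (fun s : ℝ => U s z θ) t
/-- The pointwise derivative in `z`. -/
def pz (U : ℝ → ℝ → ℝ → ℂ) (t z θ : ℝ) : ℂ := deriv (fun w : ℝ => U t w θ) z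
/-- The pointwise derivative in `θ`. -/
def pθ (U : ℝ → ℝ → ℝ → ℂ) (t z θ : ℝ) : ℂ := deriv (fun p : ℝ => U t z p) θ

/-- Joint smoothness in `(t, z, θ)`. -/
def Smooth3 (U : ℝ → ℝ → ℝ → ℂ) : Prop :=
  ContDiff ℝ (⊤ : ℕ∞) (fun p : ℝ × ℝ × ℝ => U p.1 p.2.1 p.2.2)

/-- `2π`-periodicity in `z` and `θ`. -/
def Per3 (U : ℝ → ℝ → ℝ → ℂ) : Prop :=
  ∀ t z θ, U t (z + 2 * Real.pi) θ = U t z θ ∧ U t z (θ + 2 * Real.pi) = U t z θ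

section partials
variable {U : ℝ → ℝ → ℝ → ℂ}

lemma Smooth3.hasDeriv_line (hU : Smooth3 U) (g : ℝ → ℝ × ℝ × ℝ) (v : ℝ × ℝ × ℝ) (x : ℝ)
    (hg : HasDerivAt g v x) :
    HasDerivAt (fun s => U (g s).1 (g s).2.1 (g s).2.2)
      (fderiv ℝ (fun p : ℝ × ℝ × ℝ => U p.1 p.2.1 p.2.2) (g x) v) x := by
  have h1 : DifferentiableAt ℝ (fun p : ℝ × ℝ × ℝ => U p.1 p.2.1 p.2.2) (g x) :=
    (hU.differentiable (by simp)).differentiableAt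
  exact h1.hasFDerivAt.comp_hasDerivAt x hg

lemma Smooth3.has_t (hU : Smooth3 U) (t z θ : ℝ) :
    HasDerivAt (fun s => U s z θ)
      (fderiv ℝ (fun p : ℝ × ℝ × ℝ => U p.1 p.2.1 p.2.2) (t, z, θ) (1, 0, 0)) t :=
  hU.hasDeriv_line (fun s => (s, z, θ)) (1, 0, 0) t
    ((hasDerivAt_id t).prodMk ((hasDerivAt_const t z).prodMk (hasDerivAt_const t θ)))

lemma Smooth3.has_z (hU : Smooth3 U) (t z θ : ℝ) :
    HasDerivAt (fun s => U t s θ)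
      (fderiv ℝ (fun p : ℝ × ℝ × ℝ => U p.1 p.2.1 p.2.2) (t, z, θ) (0, 1, 0)) z :=
  hU.hasDeriv_line (fun s => (t, s, θ)) (0, 1, 0) z
    ((hasDerivAt_const z t).prodMk ((hasDerivAt_id z).prodMk (hasDerivAt_const z θ)))

lemma Smooth3.has_θ (hU : Smooth3 U) (t z θ : ℝ) :
    HasDerivAt (fun s => U t z s)
      (fderiv ℝ (fun p : ℝ × ℝ × ℝ => U p.1 p.2.1 p.2.2) (t, z, θ) (0, 0, 1)) θ :=
  hU.hasDeriv_line (fun s => (t, z, s)) (0, 0, 1) θ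
    ((hasDerivAt_const θ t).prodMk ((hasDerivAt_const θ z).prodMk (hasDerivAt_id θ)))

lemma Smooth3.pt_eq (hU : Smooth3 U) : pt U = fun t z θ =>
    fderiv ℝ (fun p : ℝ × ℝ × ℝ => U p.1 p.2.1 p.2.2) (t, z, θ) (1, 0, 0) := by
  funext t z θ; exact (hU.has_t t z θ).deriv
lemma Smooth3.pz_eq (hU : Smooth3 U) : pz U = fun t z θ =>
    fderiv ℝ (fun p : ℝ × ℝ × ℝ => U p.1 p.2.1 p.2.2) (t, z, θ) (0, 1, 0) := by
  funext t z θ; exact (hU.has_z t z θ).deriv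
lemma Smooth3.pθ_eq (hU : Smooth3 U) : pθ U = fun t z θ =>
    fderiv ℝ (fun p : ℝ × ℝ × ℝ => U p.1 p.2.1 p.2.2) (t, z, θ) (0, 0, 1) := by
  funext t z θ; exact (hU.has_θ t z θ).deriv

lemma Smooth3.dir (hU : Smooth3 U) (v : ℝ × ℝ × ℝ) :
    Smooth3 (fun t z θ => fderiv ℝ (fun p : ℝ × ℝ × ℝ => U p.1 p.2.1 p.2.2) (t, z, θ) v) := by
  have h : ContDiff ℝ (⊤ : ℕ∞) (fderiv ℝ (fun p : ℝ × ℝ × ℝ => U p.1 p.2.1 p.2.2)) :=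
    ContDiff.fderiv_right hU (by simp)
  exact h.clm_apply contDiff_const

lemma Smooth3.pt (hU : Smooth3 U) : Smooth3 (pt U) := by rw [hU.pt_eq]; exact hU.dir _
lemma Smooth3.pz (hU : Smooth3 U) : Smooth3 (pz U) := by rw [hU.pz_eq]; exact hU.dir _
lemma Smooth3.pθ (hU : Smooth3 U) : Smooth3 (pθ U) := by rw [hU.pθ_eq]; exact hU.dir _

lemma Smooth3.hasDerivAt_t (hU : Smooth3 U) (t z θ : ℝ) :
    HasDerivAt (fun s => U s z θ) (_root_.pt U t z θ) t :=
  (hU.has_t t z θ).differentiableAt.hasDerivAt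
lemma Smooth3.hasDerivAt_z (hU : Smooth3 U) (t z θ : ℝ) :
    HasDerivAt (fun s => U t s θ) (_root_.pz U t z θ) z :=
  (hU.has_z t z θ).differentiableAt.hasDerivAt
lemma Smooth3.hasDerivAt_θ (hU : Smooth3 U) (t z θ : ℝ) :
    HasDerivAt (fun s => U t z s) (_root_.pθ U t z θ) θ :=
  (hU.has_θ t z θ).differentiableAt.hasDerivAt

lemma Smooth3.second (hU : Smooth3 U) (x v w : ℝ × ℝ × ℝ) :
    fderiv ℝ (fun p : ℝ × ℝ × ℝ =>
      fderiv ℝ (fun p : ℝ × ℝ × ℝ => U p.1 p.2.1 p.2.2) p v) x w =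
    fderiv ℝ (fderiv ℝ (fun p : ℝ × ℝ × ℝ => U p.1 p.2.1 p.2.2)) x w v := by
  have h : ContDiff ℝ (⊤ : ℕ∞) (fderiv ℝ (fun p : ℝ × ℝ × ℝ => U p.1 p.2.1 p.2.2)) :=
    ContDiff.fderiv_right hU (by simp)
  have h1 : DifferentiableAt ℝ (fderiv ℝ (fun p : ℝ × ℝ × ℝ => U p.1 p.2.1 p.2.2)) x :=
    (h.differentiable (by simp)).differentiableAt
  rw [fderiv_clm_apply h1 (differentiableAt_const v)]
  simp

lemma Smooth3.symm (hU : Smooth3 U) (x v w : ℝ × ℝ × ℝ) :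
    fderiv ℝ (fderiv ℝ (fun p : ℝ × ℝ × ℝ => U p.1 p.2.1 p.2.2)) x w v =
    fderiv ℝ (fderiv ℝ (fun p : ℝ × ℝ × ℝ => U p.1 p.2.1 p.2.2)) x v w :=
  ((ContDiff.contDiffAt hU).isSymmSndFDerivAt (by
    simp only [minSmoothness_of_isRCLikeNormedField]; exact WithTop.coe_le_coe.2 (le_top : (2 : ℕ∞) ≤ ⊤))).eq w v

lemma Smooth3.comm_tz (hU : Smooth3 U) : _root_.pt (_root_.pz U) = _root_.pz (_root_.pt U) := by
  rw [hU.pz.pt_eq, hU.pt.pz_eq, hU.pz_eq, hU.pt_eq]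
  funext t z θ
  exact (hU.second _ _ _).trans ((hU.symm _ _ _).trans (hU.second _ _ _).symm)

lemma Smooth3.comm_tθ (hU : Smooth3 U) : _root_.pt (_root_.pθ U) = _root_.pθ (_root_.pt U) := by
  rw [hU.pθ.pt_eq, hU.pt.pθ_eq, hU.pθ_eq, hU.pt_eq]
  funext t z θ
  exact (hU.second _ _ _).trans ((hU.symm _ _ _).trans (hU.second _ _ _).symm)

lemma Per3.pt (h : Per3 U) : Per3 (pt U) := by
  intro t z θ
  constructor
  · exact congrArg (fun g => deriv g t) (funext fun s => (h s z θ).1)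
  · exact congrArg (fun g => deriv g t) (funext fun s => (h s z θ).2)
lemma Per3.pz (h : Per3 U) : Per3 (pz U) := by
  intro t z θ
  constructor
  · have : (fun w => U t (w + 2 * Real.pi) θ) = fun w => U t w θ := funext fun w => (h t w θ).1
    have h2 := deriv_comp_add_const (fun w => U t w θ) (2 * Real.pi) z
    rw [this] at h2
    exact h2.symm
  · exact congrArg (fun g => deriv g z) (funext fun s => (h t s θ).2)
lemma Per3.pθ (h : Per3 U) : Per3 (pθ U) := by
  intro t z θ
  constructor
  · exact congrArg (fun g => deriv g θ) (funext fun s => (h t z s).1)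
  · have : (fun w => U t z (w + 2 * Real.pi)) = fun w => U t z w := funext fun w => (h t z w).2
    have h2 := deriv_comp_add_const (fun w => U t z w) (2 * Real.pi) θ
    rw [this] at h2
    exact h2.symm

end partials

/-- Differentiation under the integral sign for a jointly continuous derivative. -/
lemma hasDerivAt_param {F F' : ℝ → ℝ → ℝ} (a b : ℝ)
    (hF : Continuous (Function.uncurry F)) (hF' : Continuous (Function.uncurry F'))
    (hd : ∀ t x, HasDerivAt (fun s => F s x) (F' t x) t) (t : ℝ) :
    HasDerivAt (fun s => ∫ x in a..b, F s x) (∫ x in a..b, F' t x) t := by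
  have hc : IsCompact (Metric.closedBall t 1 ×ˢ Set.uIcc a b) :=
    (isCompact_closedBall t 1).prod isCompact_uIcc
  obtain ⟨C, hC⟩ := hc.exists_bound_of_continuousOn hF'.continuousOn
  refine (intervalIntegral.hasDerivAt_integral_of_dominated_loc_of_deriv_le
    (F := F) (F' := F') (bound := fun _ => C) (s := Metric.closedBall t 1)
    (Metric.closedBall_mem_nhds t one_pos) ?_ ?_ ?_ ?_ ?_ ?_).2
  · refine Eventually.of_forall fun s => ?_
    exact (hF.comp (by fun_prop : Continuous fun x : ℝ => (s, x))).aestronglyMeasurable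
  · exact (hF.comp (by fun_prop : Continuous fun x : ℝ => (t, x))).intervalIntegrable _ _
  · exact (hF'.comp (by fun_prop : Continuous fun x : ℝ => (t, x))).aestronglyMeasurable
  · refine Eventually.of_forall fun x hx s hs => ?_
    exact hC (s, x) ⟨hs, Set.uIoc_subset_uIcc hx⟩
  · exact intervalIntegrable_const
  · exact Eventually.of_forall fun x _ s _ => hd s x

/-! ### Integration over a period cell and the energy estimate -/

/-- The energy flux identity: the time derivative of the energy density is a divergence plus
the work done by the source and the damping. -/
lemma flux_identity (x y w xt xz xθ yz wθ g : ℂ) (r r' a : ℝ) (hr : r ≠ 0)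
    (h : xt - ((r : ℂ)⁻¹ * ((r' : ℂ) * y + (r : ℂ) * yz) + ((r : ℂ) ^ 2)⁻¹ * wθ) + (a : ℂ) * x = g) :
    (2 * inner ℝ x xt + 2 * inner ℝ y xz + (r ^ 2)⁻¹ * (2 * inner ℝ w xθ)) * r
      = (2 * r' * inner ℝ x y + 2 * r * (inner ℝ x yz + inner ℝ xz y))
        + 2 * r⁻¹ * (inner ℝ x wθ + inner ℝ xθ w) + 2 * r * inner ℝ x (g - (a : ℂ) * x) := by
  have hx : xt = ((r⁻¹ : ℝ) : ℂ) * ((r' : ℂ) * y + (r : ℂ) * yz) + (((r ^ 2)⁻¹ : ℝ) : ℂ) * wθ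
      - (a : ℂ) * x + g := by
    push_cast; rw [← h]; ring
  subst hx
  simp only [Complex.inner, Complex.add_re, Complex.mul_re, Complex.conj_re, Complex.conj_im,
    Complex.sub_re, Complex.sub_im, Complex.add_im, Complex.mul_im, Complex.ofReal_re,
    Complex.ofReal_im]
  field_simp
  ring

lemma work_le (x g : ℂ) (r a T Γ : ℝ) (hr : 0 ≤ r) (ha : 0 ≤ a) (hT : 0 < T)
    (hg : ‖g‖ ≤ Γ) :
    2 * r * inner ℝ x (g - (a : ℂ) * x) ≤ (‖x‖ ^ 2 / T) * r + T * Γ ^ 2 * r := by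
  have h1 : inner ℝ x (g - (a : ℂ) * x) = inner ℝ x g - a * ‖x‖ ^ 2 := by
    rw [inner_sub_right, ← Complex.real_smul, inner_smul_right, real_inner_self_eq_norm_sq]
  have h2 : inner ℝ x g ≤ ‖x‖ * Γ :=
    (real_inner_le_norm x g).trans (by gcongr)
  have h3 : 2 * (‖x‖ * Γ) ≤ ‖x‖ ^ 2 / T + T * Γ ^ 2 := by
    have : ‖x‖ ^ 2 / T + T * Γ ^ 2 - 2 * (‖x‖ * Γ) = (‖x‖ - T * Γ) ^ 2 / T := by
      field_simp; ring
    have h4 : 0 ≤ (‖x‖ - T * Γ) ^ 2 / T := by positivity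
    linarith
  have h5 : 2 * inner ℝ x (g - (a : ℂ) * x) ≤ ‖x‖ ^ 2 / T + T * Γ ^ 2 := by
    rw [h1]
    have : 0 ≤ a * ‖x‖ ^ 2 := by positivity
    linarith
  nlinarith

/-- The double integral over a period cell. -/
def cell (F : ℝ → ℝ → ℝ) : ℝ :=
  ∫ θ in (0:ℝ)..(2 * Real.pi), ∫ z in (0:ℝ)..(2 * Real.pi), F z θ

lemma cell_inner_cont {F : ℝ → ℝ → ℝ} (hF : Continuous (Function.uncurry F)) :
    Continuous fun θ => ∫ z in (0:ℝ)..(2 * Real.pi), F z θ := by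
  refine intervalIntegral.continuous_parametric_intervalIntegral_of_continuous' ?_ _ _
  exact hF.comp (by fun_prop : Continuous fun p : ℝ × ℝ => (p.2, p.1))

lemma cell_add {F G : ℝ → ℝ → ℝ} (hF : Continuous (Function.uncurry F))
    (hG : Continuous (Function.uncurry G)) :
    cell (fun z θ => F z θ + G z θ) = cell F + cell G := by
  unfold cell
  rw [← intervalIntegral.integral_add ((cell_inner_cont hF).intervalIntegrable _ _)
    ((cell_inner_cont hG).intervalIntegrable _ _)]
  refine intervalIntegral.integral_congr fun θ _ => ?_
  exact intervalIntegral.integral_add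
    ((hF.comp (by fun_prop : Continuous fun z : ℝ => (z, θ))).intervalIntegrable _ _)
    ((hG.comp (by fun_prop : Continuous fun z : ℝ => (z, θ))).intervalIntegrable _ _)

lemma cell_mono {F G : ℝ → ℝ → ℝ} (hF : Continuous (Function.uncurry F))
    (hG : Continuous (Function.uncurry G)) (h : ∀ z θ, F z θ ≤ G z θ) : cell F ≤ cell G := by
  have hpi : (0:ℝ) ≤ 2 * Real.pi := by positivity
  unfold cell
  refine intervalIntegral.integral_mono hpi ((cell_inner_cont hF).intervalIntegrable _ _)
    ((cell_inner_cont hG).intervalIntegrable _ _) fun θ => ?_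
  exact intervalIntegral.integral_mono hpi
    ((hF.comp (by fun_prop : Continuous fun z : ℝ => (z, θ))).intervalIntegrable _ _)
    ((hG.comp (by fun_prop : Continuous fun z : ℝ => (z, θ))).intervalIntegrable _ _)
    fun z => h z θ

lemma cell_const_mul (c : ℝ) (F : ℝ → ℝ → ℝ) :
    cell (fun z θ => c * F z θ) = c * cell F := by
  simp only [cell, intervalIntegral.integral_const_mul]

lemma cell_const (c : ℝ) : cell (fun _ _ => c) = (2 * Real.pi) ^ 2 * c := by
  simp [cell]; ring

lemma cell_dz {X X' : ℝ → ℝ → ℝ} (hX' : Continuous (Function.uncurry X'))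
    (hd : ∀ z θ, HasDerivAt (fun s => X s θ) (X' z θ) z)
    (hp : ∀ z θ, X (z + 2 * Real.pi) θ = X z θ) : cell X' = 0 := by
  unfold cell
  have : ∀ θ, ∫ z in (0:ℝ)..(2 * Real.pi), X' z θ = 0 := fun θ => by
    rw [intervalIntegral.integral_eq_sub_of_hasDerivAt (fun z _ => hd z θ)
      ((hX'.comp (by fun_prop : Continuous fun z : ℝ => (z, θ))).intervalIntegrable _ _)]
    have := hp 0 θ
    rw [zero_add] at this
    rw [this, sub_self]
  simp [this]

lemma cell_swap {F : ℝ → ℝ → ℝ} (hF : Continuous (Function.uncurry F)) :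
    cell F = cell (fun z θ => F θ z) := by
  unfold cell
  rw [MeasureTheory.intervalIntegral_intervalIntegral_swap]
  have : IntegrableOn (Function.uncurry fun x y => F y x)
      (Set.uIcc 0 (2 * Real.pi) ×ˢ Set.uIcc 0 (2 * Real.pi)) (volume.prod volume) :=
    (hF.comp (by fun_prop : Continuous fun p : ℝ × ℝ => (p.2, p.1))).continuousOn.integrableOn_compact
      (isCompact_uIcc.prod isCompact_uIcc)
  exact this.mono_set (Set.prod_mono Set.uIoc_subset_uIcc Set.uIoc_subset_uIcc)

lemma cell_dθ {X X' : ℝ → ℝ → ℝ} (hX' : Continuous (Function.uncurry X'))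
    (hd : ∀ z θ, HasDerivAt (fun s => X z s) (X' z θ) θ)
    (hp : ∀ z θ, X z (θ + 2 * Real.pi) = X z θ) : cell X' = 0 := by
  rw [cell_swap hX']
  exact cell_dz (X := fun z θ => X θ z)
    (hX'.comp (by fun_prop : Continuous fun p : ℝ × ℝ => (p.2, p.1)))
    (fun z θ => hd θ z) (fun z θ => hp θ z)

lemma cell_hasDerivAt {F F' : ℝ → ℝ → ℝ → ℝ}
    (hF : Continuous (fun p : ℝ × ℝ × ℝ => F p.1 p.2.1 p.2.2))
    (hF' : Continuous (fun p : ℝ × ℝ × ℝ => F' p.1 p.2.1 p.2.2))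
    (hd : ∀ t z θ, HasDerivAt (fun s => F s z θ) (F' t z θ) t) (t : ℝ) :
    HasDerivAt (fun s => cell (F s)) (cell (F' t)) t := by
  unfold cell
  refine hasDerivAt_param (F := fun s θ => ∫ z in (0:ℝ)..(2 * Real.pi), F s z θ)
    (F' := fun s θ => ∫ z in (0:ℝ)..(2 * Real.pi), F' s z θ) 0 (2 * Real.pi) ?_ ?_ ?_ t
  · refine intervalIntegral.continuous_parametric_intervalIntegral_of_continuous'
      (f := fun (p : ℝ × ℝ) z => F p.1 z p.2) ?_ _ _
    exact hF.comp (by fun_prop : Continuous fun p : (ℝ × ℝ) × ℝ => (p.1.1, p.2, p.1.2))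
  · refine intervalIntegral.continuous_parametric_intervalIntegral_of_continuous'
      (f := fun (p : ℝ × ℝ) z => F' p.1 z p.2) ?_ _ _
    exact hF'.comp (by fun_prop : Continuous fun p : (ℝ × ℝ) × ℝ => (p.1.1, p.2, p.1.2))
  · intro t θ
    refine hasDerivAt_param (F := fun s z => F s z θ) (F' := fun s z => F' s z θ) _ _ ?_ ?_
      (fun t z => hd t z θ) t
    · exact hF.comp (by fun_prop : Continuous fun p : ℝ × ℝ => (p.1, p.2, θ))
    · exact hF'.comp (by fun_prop : Continuous fun p : ℝ × ℝ => (p.1, p.2, θ))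

lemma slice_cont {F : ℝ → ℝ → ℝ → ℝ} (h : Continuous (fun p : ℝ × ℝ × ℝ => F p.1 p.2.1 p.2.2))
    (t : ℝ) : Continuous (Function.uncurry (F t)) :=
  h.comp (by fun_prop : Continuous fun p : ℝ × ℝ => (t, p.1, p.2))

/-- The energy density. -/
def edens (R : ℝ → ℝ) (u : ℝ → ℝ → ℝ → ℂ) (t z θ : ℝ) : ℝ :=
  (‖pt u t z θ‖ ^ 2 + ‖pz u t z θ‖ ^ 2 + ((R z) ^ 2)⁻¹ * ‖pθ u t z θ‖ ^ 2) * R z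

lemma energy_eq_cell (R : ℝ → ℝ) (u : ℝ → ℝ → ℝ → ℂ) (t : ℝ) :
    energy R u t = cell (edens R u t) := rfl

lemma edens_cont {R : ℝ → ℝ} (hR : Continuous R) (hR1 : ∀ z, 1 ≤ R z)
    {u : ℝ → ℝ → ℝ → ℂ} (hu : Smooth3 u) :
    Continuous (fun p : ℝ × ℝ × ℝ => edens R u p.1 p.2.1 p.2.2) := by
  have h1 := ContDiff.continuous hu.pt
  have h2 := ContDiff.continuous hu.pz
  have h3 := ContDiff.continuous hu.pθ
  have hR2 : Continuous fun p : ℝ × ℝ × ℝ => (R p.2.1 ^ 2)⁻¹ :=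
    Continuous.inv₀ (by fun_prop) (fun p => by have := hR1 p.2.1; positivity)
  unfold edens
  fun_prop

lemma edens_slice {R : ℝ → ℝ} (hR : Continuous R) (hR1 : ∀ z, 1 ≤ R z)
    {u : ℝ → ℝ → ℝ → ℂ} (hu : Smooth3 u) (t : ℝ) :
    Continuous (Function.uncurry (edens R u t)) :=
  slice_cont (edens_cont hR hR1 hu) t

set_option maxHeartbeats 1000000 in
/-- Energy estimate for the damped wave equation with a bounded source and zero data. -/
lemma energy_est {R a : ℝ → ℝ} (hR : ContDiff ℝ (⊤ : ℕ∞) R)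
    (hRper : ∀ z, R (z + 2 * Real.pi) = R z) (hR1 : ∀ z, 1 ≤ R z)
    (ha : ∀ z, 0 ≤ a z) {CR : ℝ} (hCR : ∀ z, R z ≤ CR)
    {d : ℝ → ℝ → ℝ → ℂ} (hd : Smooth3 d) (hp : Per3 d) {Γ T : ℝ} (hT : 0 < T)
    (heq : ∀ t, 0 ≤ t → ∀ z θ, ‖pt (pt d) t z θ - lapg R (fun w p => d t w p) z θ
      + (a z : ℂ) * pt d t z θ‖ ≤ Γ)
    (h0 : ∀ z θ, d 0 z θ = 0) (h1 : ∀ z θ, pt d 0 z θ = 0) :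
    energy R d T ≤ 3 * T ^ 2 * Γ ^ 2 * ((2 * Real.pi) ^ 2 * CR) := by
  have hRc : Continuous R := hR.continuous
  have hRd : ∀ z, HasDerivAt R (deriv R z) z := fun z =>
    (hR.differentiable (by simp) z).hasDerivAt
  have hR'c : Continuous (deriv R) := hR.continuous_deriv (by simp)
  have hRne : ∀ z, R z ≠ 0 := fun z => by have := hR1 z; positivity
  have hRi : Continuous fun z => (R z)⁻¹ := hRc.inv₀ hRne
  have hRi2 : Continuous fun z => (R z ^ 2)⁻¹ :=
    Continuous.inv₀ (by fun_prop) (fun z => pow_ne_zero 2 (hRne z))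
  have cR : Continuous fun p : ℝ × ℝ × ℝ => R p.2.1 := by fun_prop
  have cR' : Continuous fun p : ℝ × ℝ × ℝ => deriv R p.2.1 := by fun_prop
  have cRi : Continuous fun p : ℝ × ℝ × ℝ => (R p.2.1)⁻¹ := hRi.comp (by fun_prop)
  have cRi2 : Continuous fun p : ℝ × ℝ × ℝ => (R p.2.1 ^ 2)⁻¹ := hRi2.comp (by fun_prop)
  have c1 := ContDiff.continuous hd.pt
  have c2 := ContDiff.continuous hd.pz
  have c3 := ContDiff.continuous hd.pθ
  have c11 := ContDiff.continuous hd.pt.pt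
  have c12 := ContDiff.continuous hd.pt.pz
  have c13 := ContDiff.continuous hd.pt.pθ
  have c22 := ContDiff.continuous hd.pz.pz
  have c33 := ContDiff.continuous hd.pθ.pθ
  -- `e'` is the time derivative of the energy density. The divergence terms `X'` and `Y'` are the
  -- `z`- and `θ`-derivatives of the energy fluxes, so they integrate to zero over a period cell.
  let e' : ℝ → ℝ → ℝ → ℝ := fun t z θ =>
    (2 * inner ℝ (pt d t z θ) (pt (pt d) t z θ) + 2 * inner ℝ (pz d t z θ) (pz (pt d) t z θ)
      + (R z ^ 2)⁻¹ * (2 * inner ℝ (pθ d t z θ) (pθ (pt d) t z θ))) * R z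
  let X' : ℝ → ℝ → ℝ → ℝ := fun t z θ =>
    2 * deriv R z * inner ℝ (pt d t z θ) (pz d t z θ)
      + 2 * R z * (inner ℝ (pt d t z θ) (pz (pz d) t z θ) + inner ℝ (pz (pt d) t z θ) (pz d t z θ))
  let Y' : ℝ → ℝ → ℝ → ℝ := fun t z θ =>
    2 * (R z)⁻¹ * (inner ℝ (pt d t z θ) (pθ (pθ d) t z θ)
      + inner ℝ (pθ (pt d) t z θ) (pθ d t z θ))
  have ce' : Continuous (fun p : ℝ × ℝ × ℝ => e' p.1 p.2.1 p.2.2) := by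
    have i1 := c1.inner (𝕜 := ℝ) c11
    have i2 := c2.inner (𝕜 := ℝ) c12
    have i3 := c3.inner (𝕜 := ℝ) c13
    exact (((i1.const_mul 2).add (i2.const_mul 2)).add (cRi2.mul (i3.const_mul 2))).mul cR
  have cX' : Continuous (fun p : ℝ × ℝ × ℝ => X' p.1 p.2.1 p.2.2) := by
    have i1 := c1.inner (𝕜 := ℝ) c2
    have i2 := c1.inner (𝕜 := ℝ) c22
    have i3 := c12.inner (𝕜 := ℝ) c2
    exact ((cR'.const_mul 2).mul i1).add ((cR.const_mul 2).mul (i2.add i3))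
  have cY' : Continuous (fun p : ℝ × ℝ × ℝ => Y' p.1 p.2.1 p.2.2) := by
    have i2 := c1.inner (𝕜 := ℝ) c33
    have i3 := c13.inner (𝕜 := ℝ) c3
    exact (cRi.const_mul 2).mul (i2.add i3)
  have hde : ∀ t z θ, HasDerivAt (fun s => edens R d s z θ) (e' t z θ) t := by
    intro t z θ
    have k1 := (hd.pt.hasDerivAt_t t z θ).norm_sq
    have k2 := (hd.pz.hasDerivAt_t t z θ).norm_sq
    have k3 := (hd.pθ.hasDerivAt_t t z θ).norm_sq
    rw [hd.comm_tz] at k2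
    rw [hd.comm_tθ] at k3
    exact ((k1.add k2).add (k3.const_mul ((R z ^ 2)⁻¹))).mul_const (R z)
  have hX0 : ∀ t, cell (X' t) = 0 := fun t => by
    refine cell_dz (X := fun z θ => 2 * R z * inner ℝ (pt d t z θ) (pz d t z θ)) (slice_cont cX' t) ?_ ?_
    · intro z θ
      have := ((hRd z).const_mul 2).mul
        ((hd.pt.hasDerivAt_z t z θ).inner ℝ (hd.pz.hasDerivAt_z t z θ))
      exact this
    · intro z θ
      simp only [hRper, (hp.pt t z θ).1, (hp.pz t z θ).1]
  have hY0 : ∀ t, cell (Y' t) = 0 := fun t => by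
    refine cell_dθ (X := fun z θ => 2 * (R z)⁻¹ * inner ℝ (pt d t z θ) (pθ d t z θ))
      (slice_cont cY' t) ?_ ?_
    · intro z θ
      exact ((hd.pt.hasDerivAt_θ t z θ).inner ℝ (hd.pθ.hasDerivAt_θ t z θ)).const_mul _
    · intro z θ
      simp only [(hp.pt t z θ).2, (hp.pθ t z θ).2]
  -- The damping term has a sign; the source is split by Young's inequality with weight `T`, so that
  -- the Gronwall factor up to time `T` is only `exp 1`.
  have hpt : ∀ t, 0 ≤ t → ∀ z θ, e' t z θ ≤ (X' t z θ + Y' t z θ) +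
      (T⁻¹ * edens R d t z θ + T * Γ ^ 2 * CR) := by
    intro t ht z θ
    have hl : lapg R (fun w p => d t w p) z θ = ((R z : ℂ))⁻¹ * (((deriv R z : ℝ) : ℂ) * pz d t z θ
        + (R z : ℂ) * pz (pz d) t z θ) + (((R z : ℂ)) ^ 2)⁻¹ * pθ (pθ d) t z θ := by
      have : HasDerivAt (fun w : ℝ => (R w : ℂ) * pz d t w θ)
          (((deriv R z : ℝ) : ℂ) * pz d t z θ + (R z : ℂ) * pz (pz d) t z θ) z :=
        (hRd z).ofReal_comp.mul (hd.pz.hasDerivAt_z t z θ)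
      have h2 := this.deriv
      unfold lapg
      exact congrArg (fun q => ((R z : ℂ))⁻¹ * q + (((R z : ℂ)) ^ 2)⁻¹ * pθ (pθ d) t z θ) h2
    have hf := flux_identity (pt d t z θ) (pz d t z θ) (pθ d t z θ) (pt (pt d) t z θ)
      (pz (pt d) t z θ) (pθ (pt d) t z θ) (pz (pz d) t z θ) (pθ (pθ d) t z θ) _ (R z)
      (deriv R z) (a z) (hRne z) rfl
    have hw := work_le (pt d t z θ) _ (R z) (a z) T Γ (by linarith [hR1 z]) (ha z) hT
      (by have := heq t ht z θ; rwa [hl] at this)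
    have he : (‖pt d t z θ‖ ^ 2 / T) * R z ≤ T⁻¹ * edens R d t z θ := by
      have hRz : 0 ≤ R z := by linarith [hR1 z]
      have h5 : ‖pt d t z θ‖ ^ 2 ≤ ‖pt d t z θ‖ ^ 2 + ‖pz d t z θ‖ ^ 2
          + ((R z) ^ 2)⁻¹ * ‖pθ d t z θ‖ ^ 2 := by
        have : 0 ≤ ‖pz d t z θ‖ ^ 2 := by positivity
        have : 0 ≤ ((R z) ^ 2)⁻¹ * ‖pθ d t z θ‖ ^ 2 := by positivity
        linarith
      have : ‖pt d t z θ‖ ^ 2 * R z ≤ edens R d t z θ := by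
        unfold edens; gcongr
      calc (‖pt d t z θ‖ ^ 2 / T) * R z = T⁻¹ * (‖pt d t z θ‖ ^ 2 * R z) := by
            field_simp
        _ ≤ _ := by gcongr
    have hr : T * Γ ^ 2 * R z ≤ T * Γ ^ 2 * CR := by gcongr; exact hCR z
    have : e' t z θ = _ := hf
    rw [this]
    change X' t z θ + Y' t z θ + _ ≤ _
    linarith
  have hE : ∀ t, HasDerivAt (fun s => energy R d s) (cell (e' t)) t := fun t =>
    cell_hasDerivAt (edens_cont hRc hR1 hd) ce' hde t
  have hE' : ∀ t, 0 ≤ t → cell (e' t) ≤ T⁻¹ * energy R d t + T * Γ ^ 2 * ((2 * Real.pi) ^ 2 * CR) := by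
    intro t ht
    have s1 := slice_cont cX' t
    have s2 := slice_cont cY' t
    have s3 := edens_slice hRc hR1 hd t
    have s4 : Continuous (Function.uncurry fun z θ => T⁻¹ * edens R d t z θ) := s3.const_mul _
    have s5 : Continuous (Function.uncurry fun (_ _ : ℝ) => T * Γ ^ 2 * CR) := continuous_const
    have s12 : Continuous (Function.uncurry fun z θ => X' t z θ + Y' t z θ) := s1.add s2
    have s45 : Continuous (Function.uncurry fun z θ => T⁻¹ * edens R d t z θ + T * Γ ^ 2 * CR) :=
      s4.add s5
    have s15 : Continuous (Function.uncurry fun z θ => (X' t z θ + Y' t z θ) +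
      (T⁻¹ * edens R d t z θ + T * Γ ^ 2 * CR)) := s12.add s45
    have hm := cell_mono (slice_cont ce' t) s15 (hpt t ht)
    rw [cell_add s12 s45, cell_add s1 s2, cell_add s4 s5, hX0, hY0,
      cell_const_mul, cell_const, ← energy_eq_cell] at hm
    linarith
  have hE0 : energy R d 0 = 0 := by
    rw [energy_eq_cell]
    have : edens R d 0 = fun _ _ => 0 := by
      funext z θ
      have z1 : pz d 0 z θ = 0 := by
        have : (fun w => d 0 w θ) = fun _ => 0 := funext fun w => h0 w θ
        simp [pz, this]
      have z2 : pθ d 0 z θ = 0 := by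
        have : (fun w => d 0 z w) = fun _ => 0 := funext fun w => h0 z w
        simp [pθ, this]
      simp [edens, h1, z1, z2]
    rw [this, cell_const, mul_zero]
  -- Grönwall with rate `1/T`, so that the exponential loss over `[0, T]` is at most `e ≤ 3`.
  set K : ℝ := T * Γ ^ 2 * ((2 * Real.pi) ^ 2 * CR) with hK
  have hCR0 : 0 ≤ CR := by linarith [hR1 0, hCR 0]
  have hK0 : 0 ≤ K := by positivity
  let G : ℝ → ℝ := fun t => Real.exp (-(T⁻¹ * t)) * energy R d t - K * t
  have hG : ∀ t, HasDerivAt G (Real.exp (-(T⁻¹ * t)) * (-(T⁻¹ * 1)) * energy R d t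
      + Real.exp (-(T⁻¹ * t)) * cell (e' t) - K * 1) t := fun t =>
    (((((hasDerivAt_id t).const_mul T⁻¹).neg).exp).mul (hE t)).sub ((hasDerivAt_id t).const_mul K)
  have hanti : AntitoneOn G (Set.Icc 0 T) := by
    refine antitoneOn_of_deriv_nonpos (convex_Icc 0 T)
      (fun t _ => (hG t).continuousAt.continuousWithinAt)
      (fun t _ => (hG t).differentiableAt.differentiableWithinAt) ?_
    intro t ht
    rw [interior_Icc] at ht
    rw [(hG t).deriv]
    have hle := hE' t ht.1.le
    have hx : 0 < Real.exp (-(T⁻¹ * t)) := Real.exp_pos _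
    have hx1 : Real.exp (-(T⁻¹ * t)) ≤ 1 := by
      rw [Real.exp_le_one_iff]
      have : 0 ≤ T⁻¹ * t := mul_nonneg (by positivity) ht.1.le
      linarith
    nlinarith [mul_le_mul_of_nonneg_left hle hx.le, mul_le_mul_of_nonneg_right hx1 hK0]
  have hfin := hanti (Set.left_mem_Icc.2 hT.le) (Set.right_mem_Icc.2 hT.le) hT.le
  simp only [G, hE0, mul_zero, sub_zero] at hfin
  rw [inv_mul_cancel₀ hT.ne'] at hfin
  have he3 : Real.exp 1 ≤ 3 := by linarith [Real.exp_one_lt_d9]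
  have hfin2 : energy R d T ≤ Real.exp 1 * (K * T) := by
    have : Real.exp 1 * (Real.exp (-1) * energy R d T) = energy R d T := by
      rw [← mul_assoc, ← Real.exp_add]; simp
    have h7 : Real.exp (-1) * energy R d T ≤ K * T := by linarith
    calc energy R d T = Real.exp 1 * (Real.exp (-1) * energy R d T) := this.symm
      _ ≤ _ := by gcongr
  calc energy R d T ≤ Real.exp 1 * (K * T) := hfin2
    _ ≤ 3 * (K * T) := by gcongr
    _ = _ := by rw [hK]; ring

/-! ### Polynomially bounded families and Sobolev norms of single modes -/

/-- Zeroth-order part of `PB`: continuity and a bound by a power of the size function `L`. -/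
def PB0 {ι : Type*} (L : ι → ℝ) (g : ι → ℝ → ℂ) : Prop :=
  (∀ i, Continuous (g i)) ∧ ∃ C : ℝ, ∃ K : ℕ, 0 ≤ C ∧ ∀ i z, ‖g i z‖ ≤ C * L i ^ K

/-- A family of functions whose derivatives up to order `k` are bounded, uniformly in the
family and in `z`, by powers of the size function `L`. -/
def PB {ι : Type*} (L : ι → ℝ) : ℕ → (ι → ℝ → ℂ) → Prop
  | 0, g => PB0 L g
  | k + 1, g => PB0 L g ∧ ∃ g' : ι → ℝ → ℂ, (∀ i z, HasDerivAt (g i) (g' i z) z) ∧ PB L k g'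

section PBsec
variable {ι : Type*} {L : ι → ℝ}

lemma PB.zero {k : ℕ} {g : ι → ℝ → ℂ} (h : PB L k g) : PB0 L g := by
  cases k with
  | zero => exact h
  | succ k => exact h.1

lemma PB.of_succ {k : ℕ} : ∀ {g : ι → ℝ → ℂ}, PB L (k + 1) g → PB L k g := by
  induction k with
  | zero => intro g h; exact h.1
  | succ k ih => intro g h; exact ⟨h.1, h.2.choose, h.2.choose_spec.1, ih h.2.choose_spec.2⟩

lemma PB0.add (hL : ∀ i, 1 ≤ L i) {g h : ι → ℝ → ℂ} (hg : PB0 L g) (hh : PB0 L h) :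
    PB0 L (fun i z => g i z + h i z) := by
  obtain ⟨cg, C, K, hC, hb⟩ := hg
  obtain ⟨ch, C', K', hC', hb'⟩ := hh
  refine ⟨fun i => (cg i).add (ch i), C + C', K + K', by positivity, fun i z => ?_⟩
  have h1 : L i ^ K ≤ L i ^ (K + K') := pow_le_pow_right₀ (hL i) (by omega)
  have h2 : L i ^ K' ≤ L i ^ (K + K') := pow_le_pow_right₀ (hL i) (by omega)
  calc ‖g i z + h i z‖ ≤ C * L i ^ K + C' * L i ^ K' :=
        (norm_add_le _ _).trans (add_le_add (hb i z) (hb' i z))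
    _ ≤ C * L i ^ (K + K') + C' * L i ^ (K + K') := by gcongr
    _ = _ := by ring

lemma PB0.mul (hL : ∀ i, 1 ≤ L i) {g h : ι → ℝ → ℂ} (hg : PB0 L g) (hh : PB0 L h) :
    PB0 L (fun i z => g i z * h i z) := by
  obtain ⟨cg, C, K, hC, hb⟩ := hg
  obtain ⟨ch, C', K', hC', hb'⟩ := hh
  refine ⟨fun i => (cg i).mul (ch i), C * C', K + K', by positivity, fun i z => ?_⟩
  have h0 : 0 ≤ L i := by linarith [hL i]
  calc ‖g i z * h i z‖ ≤ (C * L i ^ K) * (C' * L i ^ K') := by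
        rw [norm_mul]; gcongr
        · exact hb i z
        · exact hb' i z
    _ = _ := by ring

lemma PB.add (hL : ∀ i, 1 ≤ L i) {k : ℕ} : ∀ {g h : ι → ℝ → ℂ}, PB L k g → PB L k h →
    PB L k (fun i z => g i z + h i z) := by
  induction k with
  | zero => intro g h hg hh; exact PB0.add hL hg hh
  | succ k ih =>
    intro g h hg hh
    obtain ⟨g0, g', hg', pg'⟩ := hg
    obtain ⟨h0, h', hh', ph'⟩ := hh
    exact ⟨g0.add hL h0, _, fun i z => (hg' i z).add (hh' i z), ih pg' ph'⟩

lemma PB.mul (hL : ∀ i, 1 ≤ L i) {k : ℕ} : ∀ {g h : ι → ℝ → ℂ}, PB L k g → PB L k h →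
    PB L k (fun i z => g i z * h i z) := by
  induction k with
  | zero => intro g h hg hh; exact PB0.mul hL hg hh
  | succ k ih =>
    intro g h hg hh
    have hg1 := hg.of_succ
    have hh1 := hh.of_succ
    obtain ⟨g0, g', hg', pg'⟩ := hg
    obtain ⟨h0, h', hh', ph'⟩ := hh
    exact ⟨g0.mul hL h0, _, fun i z => (hg' i z).mul (hh' i z),
      PB.add hL (ih pg' hh1) (ih hg1 ph')⟩

/-- Constants in `z` of polynomial size. -/
lemma PB.const (c : ι → ℂ) (C : ℝ) (K : ℕ) (hC : 0 ≤ C) (hc : ∀ i, ‖c i‖ ≤ C * L i ^ K) (k : ℕ) :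
    PB L k (fun i _ => c i) := by
  induction k generalizing c C K with
  | zero => exact ⟨fun i => continuous_const, C, K, hC, fun i _ => hc i⟩
  | succ k ih =>
    refine ⟨⟨fun i => continuous_const, C, K, hC, fun i _ => hc i⟩, fun _ _ => 0,
      fun i z => hasDerivAt_const z (c i), ?_⟩
    exact ih (fun _ => 0) 0 0 le_rfl (by simp)

/-- Regularity bootstrap: if membership of `g` at order `k` gives that of its derivative, then
all derivatives of `g` are polynomially bounded. -/
lemma PB.bootstrap {g g' : ι → ℝ → ℂ} (h0 : PB0 L g)
    (hd : ∀ i z, HasDerivAt (g i) (g' i z) z) (h : ∀ k, PB L k g → PB L k g') (k : ℕ) :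
    PB L k g := by
  induction k with
  | zero => exact h0
  | succ k ih => exact ⟨h0, g', hd, h k ih⟩

/-- Pullback of a family along a change of index. -/
lemma PB.comp {κ : Type*} {L' : κ → ℝ} (φ : κ → ι) (hL0 : ∀ i, 0 ≤ L i) (hφ : ∀ j, L (φ j) ≤ L' j)
    {k : ℕ} : ∀ {g : ι → ℝ → ℂ}, PB L k g → PB L' k (fun j => g (φ j)) := by
  have key : ∀ {g : ι → ℝ → ℂ}, PB0 L g → PB0 L' (fun j => g (φ j)) := by
    rintro g ⟨c, C, K, hC, hb⟩
    refine ⟨fun j => c _, C, K, hC, fun j z => (hb _ z).trans ?_⟩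
    have := hL0 (φ j)
    gcongr
    exact hφ j
  induction k with
  | zero => intro g h; exact key h
  | succ k ih =>
    rintro g ⟨h0, g', hg', pg'⟩
    exact ⟨key h0, _, fun j z => hg' (φ j) z, ih pg'⟩

lemma PB.contDiff {k : ℕ} : ∀ {g : ι → ℝ → ℂ}, PB L k g → ∀ i, ContDiff ℝ k (g i) := by
  induction k with
  | zero => intro g h i; exact contDiff_zero.2 (h.1 i)
  | succ k ih =>
    rintro g ⟨h0, g', hg', pg'⟩ i
    have : deriv (g i) = g' i := funext fun z => (hg' i z).deriv
    push_cast
    rw [contDiff_succ_iff_deriv]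
    refine ⟨fun z => (hg' i z).differentiableAt, by simp, ?_⟩
    rw [this]
    exact ih pg' i

lemma PB.contDiff_top {g : ι → ℝ → ℂ} (h : ∀ k, PB L k g) (i : ι) :
    ContDiff ℝ (⊤ : ℕ∞) (g i) := contDiff_infty.2 fun n => (h n).contDiff i

lemma periodic_bounded {h : ℝ → ℝ} (hc : Continuous h) (hp : ∀ z, h (z + 2 * Real.pi) = h z) :
    ∃ C : ℝ, 0 ≤ C ∧ ∀ z, |h z| ≤ C := by
  obtain ⟨C, hC⟩ := (isCompact_Icc (a := (0:ℝ)) (b := 2 * Real.pi)).exists_bound_of_continuousOn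
    hc.continuousOn
  refine ⟨C, (norm_nonneg _).trans (hC 0 ⟨le_rfl, by positivity⟩), fun z => ?_⟩
  have hper : Function.Periodic h (2 * Real.pi) := hp
  obtain ⟨y, hy, hyz⟩ := hper.exists_mem_Ico₀ (by positivity) z
  rw [hyz]
  exact hC y ⟨hy.1, hy.2.le⟩

lemma deriv_periodic {h : ℝ → ℝ} (hp : ∀ z, h (z + 2 * Real.pi) = h z) (z : ℝ) :
    deriv h (z + 2 * Real.pi) = deriv h z := by
  have h2 := deriv_comp_add_const h (2 * Real.pi) z
  rw [show (fun x => h (x + 2 * Real.pi)) = h from funext hp] at h2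
  exact h2.symm

/-- A fixed smooth periodic function. -/
lemma PB.fixed {k : ℕ} : ∀ {h : ℝ → ℝ}, ContDiff ℝ (⊤ : ℕ∞) h → (∀ z, h (z + 2 * Real.pi) = h z) →
    PB L k (fun (_ : ι) z => (h z : ℂ)) := by
  have key : ∀ {h : ℝ → ℝ}, ContDiff ℝ (⊤ : ℕ∞) h → (∀ z, h (z + 2 * Real.pi) = h z) →
      PB0 L (fun (_ : ι) z => (h z : ℂ)) := by
    intro h hs hp
    obtain ⟨C, hC, hb⟩ := periodic_bounded hs.continuous hp
    refine ⟨fun _ => Complex.continuous_ofReal.comp hs.continuous, C, 0, hC, fun i z => ?_⟩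
    simpa using hb z
  induction k with
  | zero => intro h hs hp; exact key hs hp
  | succ k ih =>
    intro h hs hp
    refine ⟨key hs hp, fun _ z => ((deriv h z : ℝ) : ℂ), fun _ z => ?_, ?_⟩
    · exact ((hs.differentiable (by simp) z).hasDerivAt).ofReal_comp
    · exact ih (contDiff_infty_iff_deriv.1 hs).2 (deriv_periodic hp)

/-- Decay of Fourier coefficients by integration by parts. -/
lemma PB.fourier {k : ℕ} : ∀ {g : ι → ℝ → ℂ}, PB L k g →
    (∀ i z, g i (z + 2 * Real.pi) = g i z) →
    ∃ C : ℝ, ∃ K : ℕ, 0 ≤ C ∧ ∀ i (n : ℤ),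
      ‖∫ z in (0:ℝ)..(2 * Real.pi), g i z * Complex.exp (-Complex.I * ((n : ℂ) * (z : ℂ)))‖
        * |(n : ℝ)| ^ k ≤ C * L i ^ K := by
  induction k with
  | zero =>
    rintro g ⟨c, C, K, hC, hb⟩ -
    refine ⟨C * (2 * Real.pi), K, by positivity, fun i n => ?_⟩
    rw [pow_zero, mul_one]
    have := intervalIntegral.norm_integral_le_of_norm_le_const (a := (0:ℝ)) (b := 2 * Real.pi)
      (f := fun z : ℝ => g i z * Complex.exp (-Complex.I * ((n : ℂ) * (z : ℂ))))
      (C := C * L i ^ K) (fun z _ => by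
        have h1 : ‖Complex.exp (-Complex.I * ((n : ℂ) * (z : ℂ)))‖ = 1 := by
          rw [Complex.norm_exp]; simp
        rw [norm_mul, h1, mul_one]
        exact hb i z)
    refine this.trans (le_of_eq ?_)
    rw [sub_zero, abs_of_pos (by positivity)]
    ring
  | succ k ih =>
    rintro g ⟨h0, g', hg', pg'⟩ hp
    have hp' : ∀ i z, g' i (z + 2 * Real.pi) = g' i z := by
      intro i z
      have h1 := (hg' i (z + 2 * Real.pi)).comp_add_const z (2 * Real.pi)
      rw [show (fun x => g i (x + 2 * Real.pi)) = g i from funext (hp i)] at h1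
      exact h1.unique (hg' i z)
    obtain ⟨C, K, hC, hb⟩ := ih pg' hp'
    refine ⟨C, K, hC, fun i n => ?_⟩
    set e : ℝ → ℂ := fun z => Complex.exp (-Complex.I * ((n : ℂ) * (z : ℂ))) with he
    have hde : ∀ z, HasDerivAt e (e z * (-Complex.I * ((n : ℂ) * 1))) z := fun z =>
      (((Complex.ofRealCLM.hasDerivAt (x := z)).const_mul (n : ℂ)).const_mul (-Complex.I)).cexp
    have hec : Continuous e := by fun_prop
    have hgc := h0.1 i
    have hgc' := pg'.zero.1 i
    have hint : ∫ z in (0:ℝ)..(2 * Real.pi),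
        (g' i z * e z + g i z * (e z * (-Complex.I * ((n : ℂ) * 1)))) = 0 := by
      rw [intervalIntegral.integral_eq_sub_of_hasDerivAt (f := fun z => g i z * e z)
        (fun z _ => (hg' i z).mul (hde z)) (Continuous.intervalIntegrable (by fun_prop) _ _)]
      have h1 : g i (2 * Real.pi) = g i 0 := by have := hp i 0; rwa [zero_add] at this
      have h2 : e (2 * Real.pi) = e 0 := by
        simp only [he]
        have : -Complex.I * ((n : ℂ) * ((2 * Real.pi : ℝ) : ℂ))
            = ((-n : ℤ) : ℂ) * (2 * Real.pi * Complex.I) := by push_cast; ring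
        rw [this, Complex.exp_int_mul_two_pi_mul_I]; simp
      rw [h1, h2, sub_self]
    rw [intervalIntegral.integral_add (Continuous.intervalIntegrable (by fun_prop) _ _)
      (Continuous.intervalIntegrable (by fun_prop) _ _)] at hint
    have h3 : ∫ z in (0:ℝ)..(2 * Real.pi), g i z * (e z * (-Complex.I * ((n : ℂ) * 1)))
        = (∫ z in (0:ℝ)..(2 * Real.pi), g i z * e z) * (-Complex.I * (n : ℂ)) := by
      rw [← intervalIntegral.integral_mul_const]
      refine intervalIntegral.integral_congr fun z _ => ?_
      ring
    rw [h3] at hint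
    have h4 : ‖∫ z in (0:ℝ)..(2 * Real.pi), g' i z * e z‖
        = ‖∫ z in (0:ℝ)..(2 * Real.pi), g i z * e z‖ * |(n : ℝ)| := by
      rw [eq_neg_of_add_eq_zero_left hint, norm_neg, norm_mul]
      simp
    have h5 := hb i n
    change ‖∫ z in (0:ℝ)..(2 * Real.pi), g' i z * e z‖ * |(n : ℝ)| ^ k ≤ _ at h5
    rw [h4] at h5
    change ‖∫ z in (0:ℝ)..(2 * Real.pi), g i z * e z‖ * |(n : ℝ)| ^ (k + 1) ≤ _
    rwa [pow_succ', ← mul_assoc]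

end PBsec

lemma fcoef_mode (g : ℝ → ℂ) (m k m' : ℤ) :
    fcoef (fun z θ => g z * Complex.exp (Complex.I * ((m : ℂ) * (θ : ℂ)))) k m' =
      if m' = m then ((2 * Real.pi : ℝ) : ℂ)⁻¹ *
        ∫ z in (0:ℝ)..(2 * Real.pi), g z * Complex.exp (-Complex.I * ((k : ℂ) * (z : ℂ))) else 0 := by
  unfold fcoef
  set A := ∫ z in (0:ℝ)..(2 * Real.pi), g z * Complex.exp (-Complex.I * ((k : ℂ) * (z : ℂ))) with hA
  have h1 : ∀ θ : ℝ, ∫ z in (0:ℝ)..(2 * Real.pi),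
      g z * Complex.exp (Complex.I * ((m : ℂ) * (θ : ℂ))) *
        Complex.exp (-Complex.I * ((k : ℂ) * (z : ℂ) + (m' : ℂ) * (θ : ℂ)))
      = A * Complex.exp (Complex.I * ((m : ℂ) - m') * (θ : ℂ)) := by
    intro θ
    rw [hA, ← intervalIntegral.integral_mul_const]
    refine intervalIntegral.integral_congr fun z _ => ?_
    rw [mul_assoc, mul_assoc, ← Complex.exp_add, ← Complex.exp_add]
    congr 2; ring
  simp only [h1]
  rw [intervalIntegral.integral_const_mul]
  have hpi : ((Real.pi : ℝ) : ℂ) ≠ 0 := by exact_mod_cast Real.pi_ne_zero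
  split_ifs with h
  · subst h
    simp
    field_simp
  · have hc : Complex.I * ((m : ℂ) - m') ≠ 0 := by
      refine mul_ne_zero Complex.I_ne_zero (sub_ne_zero.2 ?_)
      exact_mod_cast fun (e : m = m') => h e.symm
    rw [integral_exp_mul_complex hc]
    have : Complex.I * ((m : ℂ) - m') * ((2 * Real.pi : ℝ) : ℂ)
        = ((m - m' : ℤ) : ℂ) * (2 * Real.pi * Complex.I) := by push_cast; ring
    rw [this, Complex.exp_int_mul_two_pi_mul_I]
    simp

lemma summable_inv_one_add_sq : Summable fun k : ℤ => (1 + (k : ℝ) ^ 2)⁻¹ := by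
  have h := Real.summable_one_div_int_pow (p := 2) |>.2 (by norm_num)
  refine Summable.of_norm_bounded_eventually h ?_
  have : ∀ᶠ k : ℤ in cofinite, k ≠ 0 := Filter.eventually_cofinite_ne 0
  filter_upwards [this] with k hk
  have hk' : (0:ℝ) < (k : ℝ) ^ 2 := by positivity
  rw [Real.norm_of_nonneg (by positivity), one_div]
  gcongr
  linarith

/-- Sobolev norms of a polynomially bounded family of single `θ`-modes are polynomially bounded. -/
lemma sobolev_mode {ι : Type*} {L : ι → ℝ} (hL : ∀ i, 1 ≤ L i) {g : ι → ℝ → ℂ}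
    (hg : ∀ k, PB L k g) (hp : ∀ i z, g i (z + 2 * Real.pi) = g i z) (m : ι → ℤ) (J : ℕ)
    (hm : ∀ i, |(m i : ℝ)| ≤ L i ^ J) (s : ℝ) :
    ∃ C : ℝ, ∃ K : ℕ, 0 ≤ C ∧ ∀ i, hsNormSq s
      (fun z θ => g i z * Complex.exp (Complex.I * ((m i : ℂ) * (θ : ℂ)))) ≤ C * L i ^ K := by
  obtain ⟨n, hn⟩ := exists_nat_ge s
  obtain ⟨C0, K0, hC0, h0⟩ := (hg 0).fourier hp
  obtain ⟨C1, K1, hC1, h1⟩ := (hg (n + 1)).fourier hp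
  set S : ℝ := ∑' k : ℤ, (1 + (k : ℝ) ^ 2)⁻¹ with hS
  have hS0 : 0 ≤ S := tsum_nonneg fun k => by positivity
  refine ⟨2 ^ n * 2 ^ n * (C0 ^ 2 + C1 ^ 2) * S, J * 2 * n + (K0 + K1) * 2, by positivity,
    fun i => ?_⟩
  have hLi := hL i
  set A : ℤ → ℂ := fun k => ∫ z in (0:ℝ)..(2 * Real.pi),
    g i z * Complex.exp (-Complex.I * ((k : ℂ) * (z : ℂ))) with hA
  set B : ℝ := 2 ^ n * 2 ^ n * (C0 ^ 2 + C1 ^ 2) * L i ^ (J * 2 * n + (K0 + K1) * 2) with hB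
  have hterm : ∀ k : ℤ, (1 + (k : ℝ) ^ 2 + (m i : ℝ) ^ 2) ^ s *
      ‖((2 * Real.pi : ℝ) : ℂ)⁻¹ * A k‖ ^ 2 ≤ B * (1 + (k : ℝ) ^ 2)⁻¹ := by
    intro k
    have e1 : (1 + (k : ℝ) ^ 2 + (m i : ℝ) ^ 2) ^ s ≤
        (1 + (m i : ℝ) ^ 2) ^ n * (1 + (k : ℝ) ^ 2) ^ n := by
      calc (1 + (k : ℝ) ^ 2 + (m i : ℝ) ^ 2) ^ s
          ≤ (1 + (k : ℝ) ^ 2 + (m i : ℝ) ^ 2) ^ (n : ℝ) :=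
            Real.rpow_le_rpow_of_exponent_le (by nlinarith [sq_nonneg (k : ℝ), sq_nonneg (m i : ℝ)]) hn
        _ = (1 + (k : ℝ) ^ 2 + (m i : ℝ) ^ 2) ^ n := Real.rpow_natCast _ _
        _ ≤ ((1 + (m i : ℝ) ^ 2) * (1 + (k : ℝ) ^ 2)) ^ n := by
            gcongr
            nlinarith [mul_nonneg (sq_nonneg (k : ℝ)) (sq_nonneg (m i : ℝ))]
        _ = _ := mul_pow _ _ _
    have e2 : (1 + (m i : ℝ) ^ 2) ^ n ≤ 2 ^ n * L i ^ (J * 2 * n) := by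
      have q1 : (m i : ℝ) ^ 2 ≤ (L i ^ J) ^ 2 := by
        rw [← sq_abs]; gcongr; exact hm i
      have q2 : 1 ≤ (L i ^ J) ^ 2 := one_le_pow₀ (one_le_pow₀ hLi)
      calc (1 + (m i : ℝ) ^ 2) ^ n ≤ (2 * (L i ^ J) ^ 2) ^ n := by gcongr; linarith
        _ = _ := by rw [mul_pow, ← pow_mul, ← pow_mul, mul_assoc J 2 n]
    have e3 : ‖((2 * Real.pi : ℝ) : ℂ)⁻¹ * A k‖ ≤ ‖A k‖ := by
      rw [norm_mul]
      refine mul_le_of_le_one_left (norm_nonneg _) ?_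
      rw [norm_inv, Complex.norm_real, Real.norm_of_nonneg (by positivity)]
      exact inv_le_one_of_one_le₀ (by linarith [Real.pi_gt_three])
    have a0 : ‖A k‖ ≤ C0 * L i ^ K0 := by have := h0 i k; rwa [pow_zero, mul_one] at this
    have a1 : ‖A k‖ * |(k : ℝ)| ^ (n + 1) ≤ C1 * L i ^ K1 := h1 i k
    have e4 : (1 + (k : ℝ) ^ 2) ^ (n + 1) * ‖A k‖ ^ 2 ≤
        2 ^ n * ((C0 ^ 2 + C1 ^ 2) * L i ^ ((K0 + K1) * 2)) := by
      have q := add_pow_le (zero_le_one (α := ℝ)) (sq_nonneg (k : ℝ)) (n + 1)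
      simp only [one_pow, Nat.add_sub_cancel] at q
      have q0 : ‖A k‖ ^ 2 ≤ C0 ^ 2 * L i ^ ((K0 + K1) * 2) := by
        calc ‖A k‖ ^ 2 ≤ (C0 * L i ^ K0) ^ 2 := by gcongr
          _ = C0 ^ 2 * L i ^ (K0 * 2) := by rw [mul_pow, ← pow_mul]
          _ ≤ _ := by (gcongr; omega)
      have q1 : ((k : ℝ) ^ 2) ^ (n + 1) * ‖A k‖ ^ 2 ≤ C1 ^ 2 * L i ^ ((K0 + K1) * 2) := by
        calc ((k : ℝ) ^ 2) ^ (n + 1) * ‖A k‖ ^ 2 = (‖A k‖ * |(k : ℝ)| ^ (n + 1)) ^ 2 := by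
              rw [← sq_abs (k : ℝ)]; ring
          _ ≤ (C1 * L i ^ K1) ^ 2 := by gcongr
          _ = C1 ^ 2 * L i ^ (K1 * 2) := by rw [mul_pow, ← pow_mul]
          _ ≤ _ := by (gcongr; omega)
      calc (1 + (k : ℝ) ^ 2) ^ (n + 1) * ‖A k‖ ^ 2
          ≤ (2 ^ n * (1 + ((k : ℝ) ^ 2) ^ (n + 1))) * ‖A k‖ ^ 2 := by gcongr
        _ = 2 ^ n * (‖A k‖ ^ 2 + ((k : ℝ) ^ 2) ^ (n + 1) * ‖A k‖ ^ 2) := by ring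
        _ ≤ 2 ^ n * (C0 ^ 2 * L i ^ ((K0 + K1) * 2) + C1 ^ 2 * L i ^ ((K0 + K1) * 2)) := by gcongr
        _ = _ := by ring
    have hk : 0 < 1 + (k : ℝ) ^ 2 := by positivity
    rw [← div_eq_mul_inv, le_div_iff₀ hk]
    calc (1 + (k : ℝ) ^ 2 + (m i : ℝ) ^ 2) ^ s * ‖((2 * Real.pi : ℝ) : ℂ)⁻¹ * A k‖ ^ 2
          * (1 + (k : ℝ) ^ 2)
        ≤ ((1 + (m i : ℝ) ^ 2) ^ n * (1 + (k : ℝ) ^ 2) ^ n) * ‖A k‖ ^ 2 * (1 + (k : ℝ) ^ 2) := by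
          gcongr
      _ = (1 + (m i : ℝ) ^ 2) ^ n * ((1 + (k : ℝ) ^ 2) ^ (n + 1) * ‖A k‖ ^ 2) := by ring
      _ ≤ (2 ^ n * L i ^ (J * 2 * n)) * (2 ^ n * ((C0 ^ 2 + C1 ^ 2) * L i ^ ((K0 + K1) * 2))) := by
          gcongr
      _ = B := by rw [hB, pow_add]; ring
  have hinj : Function.Injective fun k : ℤ => (k, m i) := fun a b h => (Prod.ext_iff.1 h).1
  unfold hsNormSq
  simp only [fcoef_mode]
  rw [← hinj.tsum_eq]
  · simp only [if_true]
    have hs := summable_inv_one_add_sq.mul_left B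
    have hs' := Summable.of_nonneg_of_le (fun k => by positivity) hterm hs
    refine (hs'.tsum_le_tsum hterm hs).trans (le_of_eq ?_)
    rw [tsum_mul_left, hB]; ring
  · rintro ⟨k, m'⟩ h
    by_cases hmm : m' = m i
    · exact ⟨k, by rw [hmm]⟩
    · simp [hmm] at h

/-! ### The geometry and the WKB phase and amplitude -/

/-- The properties of the metric and of the damping used in the construction: the last field says
that the damping vanishes wherever `1 - R⁻²` is small. -/
structure Geo (ε : ℝ) (R a : ℝ → ℝ) : Prop where
  eps_pos : 0 < ε
  eps_lt : ε < 1 / 2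
  Rs : ContDiff ℝ (⊤ : ℕ∞) R
  Rper : ∀ z, R (z + 2 * Real.pi) = R z
  R1 : ∀ z, 1 ≤ R z
  as : ContDiff ℝ (⊤ : ℕ∞) a
  aper : ∀ z, a (z + 2 * Real.pi) = a z
  a0 : ∀ z, 0 ≤ a z
  a1 : ∀ z, a z ≤ 1
  quad : ∀ z, |z| ≤ 2 * ε → ((R z) ^ 2)⁻¹ = 1 - z ^ 2
  dich : ∀ z, a z = 0 ∨ 4 * ε ^ 2 ≤ 1 - ((R z) ^ 2)⁻¹

/-- The potential `w = 1 - R⁻²`. -/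
def pot (R : ℝ → ℝ) (z : ℝ) : ℝ := 1 - ((R z) ^ 2)⁻¹

/-- The classical momentum `q = √(η + w)`. -/
def mom (R : ℝ → ℝ) (η z : ℝ) : ℝ := √(η + pot R z)

/-- The inverse momentum `P = 1 / q`. -/
def imom (R : ℝ → ℝ) (η z : ℝ) : ℝ := (mom R η z)⁻¹

/-- The total travel time `∫₀^{2π} P`. -/
def tottime (R : ℝ → ℝ) (η : ℝ) : ℝ := ∫ z in (0:ℝ)..(2 * Real.pi), imom R η z

/-- The total damping `∫₀^{2π} a P` met along the trajectory. -/
def totdamp (R a : ℝ → ℝ) (η : ℝ) : ℝ := ∫ z in (0:ℝ)..(2 * Real.pi), a z * imom R η z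

/-- The decay rate of the quasimode: half the average of the damping. -/
def rate (R a : ℝ → ℝ) (η : ℝ) : ℝ := totdamp R a η / (2 * tottime R η)

/-- The frequency factor `√(1 + η)`. -/
def freq (η : ℝ) : ℝ := √(1 + η)

/-- The logarithm `B` of the WKB amplitude, `B' = b` with `b = wkbb`. -/
def wkbB (R a : ℝ → ℝ) (η z : ℝ) : ℝ :=
  freq η / 2 * (∫ y in (0:ℝ)..z, (a y - 2 * rate R a η) * imom R η y)
    - Real.log (R z) / 2 - Real.log (η + pot R z) / 4

/-- The logarithmic derivative `b` of the WKB amplitude, as dictated by the transport equation. -/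
def wkbb (R a : ℝ → ℝ) (η z : ℝ) : ℝ :=
  freq η * (a z - 2 * rate R a η) * imom R η z / 2
    - deriv (pot R) z * imom R η z ^ 2 / 4 - deriv R z / R z / 2

lemma freq_le {η : ℝ} (hη1 : η ≤ 1) : freq η ≤ 2 := by
  unfold freq
  rw [Real.sqrt_le_left (by norm_num)]
  linarith

section geo
variable {ε : ℝ} {R a : ℝ → ℝ}

/-- Away from the set where it equals `z²`, the potential `1 - R⁻²` is bounded below, because `R`
increases on `[0, π]` and is even and periodic. -/
lemma Geo.mk' (hε₀ : ε ∈ Set.Ioo (0:ℝ) (1/2)) (hRsmooth : ContDiff ℝ (⊤ : ℕ∞) R)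
    (hRper : ∀ z, R (z + 2 * Real.pi) = R z) (hReven : ∀ z, R (-z) = R z)
    (hRge : ∀ z, 1 ≤ R z) (hRquad : ∀ z, |z| ≤ 2 * ε → ((R z) ^ 2)⁻¹ = 1 - z ^ 2)
    (hRderiv : ∀ z ∈ Set.Ioo (0:ℝ) Real.pi, 0 < deriv R z)
    (hasmooth : ContDiff ℝ (⊤ : ℕ∞) a) (haper : ∀ z, a (z + 2 * Real.pi) = a z)
    (harange : ∀ z, a z ∈ Set.Icc (0:ℝ) 1) (hazero : ∀ z, |z| ≤ 2 * ε → a z = 0) :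
    Geo ε R a where
  eps_pos := hε₀.1
  eps_lt := hε₀.2
  Rs := hRsmooth
  Rper := hRper
  R1 := hRge
  as := hasmooth
  aper := haper
  a0 z := (harange z).1
  a1 z := (harange z).2
  quad := hRquad
  dich := by
    intro z
    have hε := hε₀.1
    have hmono : StrictMonoOn R (Set.Icc 0 Real.pi) :=
      strictMonoOn_of_deriv_pos (convex_Icc _ _) hRsmooth.continuous.continuousOn
        (by rw [interior_Icc]; exact hRderiv)
    obtain ⟨y, hy, hRy⟩ := Function.Periodic.exists_mem_Ico (f := fun z => (R z, a z))
      (c := 2 * Real.pi) (fun z => by simp only [hRper, haper]) (by positivity) z (-Real.pi)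
    obtain ⟨h1, h2⟩ := Prod.ext_iff.1 hRy
    simp only at h1 h2
    rw [h1, h2]
    by_cases hyy : |y| ≤ 2 * ε
    · exact Or.inl (hazero y hyy)
    right
    push Not at hyy
    have habs : |y| ≤ Real.pi := abs_le.2 ⟨hy.1, by linarith [hy.2]⟩
    have hR : R y = R |y| := by
      rcases abs_choice y with h | h
      · rw [h]
      · rw [h, hReven]
    have hlt : R (2 * ε) < R |y| :=
      hmono ⟨by linarith, by linarith⟩ ⟨abs_nonneg y, habs⟩ hyy
    have h3 := hRquad (2 * ε) (by rw [abs_of_pos (by linarith)])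
    have h4 : ((R y) ^ 2)⁻¹ ≤ ((R (2 * ε)) ^ 2)⁻¹ := by
      have := hRge (2 * ε)
      rw [hR]
      gcongr
    rw [h3] at h4
    nlinarith

variable (G : Geo ε R a) {η : ℝ}
include G

lemma Geo.Rpos (z : ℝ) : 0 < R z := by linarith [G.R1 z]

lemma Geo.pot_nonneg (z : ℝ) : 0 ≤ pot R z := by
  have := inv_le_one_of_one_le₀ (one_le_pow₀ (G.R1 z) (n := 2))
  unfold pot; linarith

lemma Geo.pot_le (z : ℝ) : pot R z ≤ 1 := by
  have : 0 ≤ ((R z) ^ 2)⁻¹ := by positivity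
  unfold pot; linarith

lemma Geo.pot_smooth : ContDiff ℝ (⊤ : ℕ∞) (pot R) :=
  contDiff_const.sub ((G.Rs.pow 2).inv fun z => by have := G.Rpos z; positivity)

lemma Geo.pot_per (z : ℝ) : pot R (z + 2 * Real.pi) = pot R z := by
  unfold pot; rw [G.Rper]

lemma Geo.W_pos (hη : 0 < η) (z : ℝ) : 0 < η + pot R z := by linarith [G.pot_nonneg z]

lemma Geo.mom_pos (hη : 0 < η) (z : ℝ) : 0 < mom R η z := Real.sqrt_pos.2 (G.W_pos hη z)

lemma Geo.mom_sq (hη : 0 < η) (z : ℝ) : mom R η z ^ 2 = η + pot R z :=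
  Real.sq_sqrt (G.W_pos hη z).le

lemma Geo.imom_pos (hη : 0 < η) (z : ℝ) : 0 < imom R η z := inv_pos.2 (G.mom_pos hη z)

lemma Geo.mom_mul_imom (hη : 0 < η) (z : ℝ) : mom R η z * imom R η z = 1 :=
  mul_inv_cancel₀ (G.mom_pos hη z).ne'

lemma Geo.mom_per (z : ℝ) : mom R η (z + 2 * Real.pi) = mom R η z := by
  unfold mom; rw [G.pot_per]

lemma Geo.imom_per (z : ℝ) : imom R η (z + 2 * Real.pi) = imom R η z := by
  unfold imom; rw [G.mom_per]

lemma Geo.mom_deriv (hη : 0 < η) (z : ℝ) :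
    HasDerivAt (mom R η) (deriv (pot R) z * imom R η z / 2) z := by
  have h1 : HasDerivAt (fun z => η + pot R z) (deriv (pot R) z) z :=
    ((G.pot_smooth.differentiable (by simp) z).hasDerivAt).const_add η
  have h2 := h1.sqrt (G.W_pos hη z).ne'
  refine h2.congr_deriv ?_
  have := (G.mom_pos hη z).ne'
  unfold imom
  change _ / (2 * mom R η z) = _
  field_simp

lemma Geo.imom_deriv (hη : 0 < η) (z : ℝ) :
    HasDerivAt (imom R η) (-(1 / 2) * deriv (pot R) z * imom R η z ^ 3) z := by
  refine ((G.mom_deriv hη z).inv (G.mom_pos hη z).ne').congr_deriv ?_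
  have := (G.mom_pos hη z).ne'
  unfold imom
  field_simp

lemma Geo.mom_cont : Continuous (mom R η) :=
  (continuous_const.add G.pot_smooth.continuous).sqrt

lemma Geo.imom_cont (hη : 0 < η) : Continuous (imom R η) :=
  G.mom_cont.inv₀ fun z => (G.mom_pos hη z).ne'

lemma Geo.aimom_le (hη : 0 < η) (z : ℝ) : a z * imom R η z ≤ 1 / (2 * ε) := by
  have he := G.eps_pos
  rcases G.dich z with h | h
  · rw [h, zero_mul]; positivity
  · have h1 : 2 * ε ≤ mom R η z := by
      refine Real.le_sqrt_of_sq_le ?_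
      have : 4 * ε ^ 2 ≤ pot R z := h
      nlinarith
    have h2 : imom R η z ≤ (2 * ε)⁻¹ := by unfold imom; gcongr
    have := G.imom_pos hη z
    rw [one_div]
    nlinarith [G.a0 z, G.a1 z]

lemma Geo.totdamp_nonneg (hη : 0 < η) : 0 ≤ totdamp R a η :=
  intervalIntegral.integral_nonneg (by positivity) fun z _ =>
    mul_nonneg (G.a0 z) (G.imom_pos hη z).le

lemma Geo.totdamp_le (hη : 0 < η) : totdamp R a η ≤ Real.pi / ε := by
  have he := G.eps_pos
  have h : totdamp R a η ≤ ∫ _ in (0:ℝ)..(2 * Real.pi), 1 / (2 * ε) :=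
    intervalIntegral.integral_mono_on (by positivity)
    ((G.as.continuous.mul (G.imom_cont hη)).intervalIntegrable _ _)
    (continuous_const.intervalIntegrable _ _) (fun z _ => G.aimom_le hη z)
  refine h.trans (le_of_eq ?_)
  simp
  field_simp

lemma Geo.tottime_pos (hη : 0 < η) : 0 < tottime R η :=
  intervalIntegral.intervalIntegral_pos_of_pos ((G.imom_cont hη).intervalIntegrable _ _)
    (fun z => G.imom_pos hη z) (by positivity)

/-- The logarithmic divergence of the travel time near the trapped orbit. -/
lemma Geo.tottime_ge (hη : 0 < η) : Real.log (2 * ε) - Real.log η / 2 ≤ tottime R η := by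
  have he := G.eps_pos
  have hs : 0 < √η := Real.sqrt_pos.2 hη
  have h2π : 2 * ε ≤ 2 * Real.pi := by linarith [G.eps_lt, Real.pi_gt_three]
  have hcont := G.imom_cont hη
  have h1 : ∫ z in (0:ℝ)..(2 * ε), imom R η z ≤ tottime R η :=
    intervalIntegral.integral_mono_interval le_rfl (by positivity) h2π
      (Filter.Eventually.of_forall fun z => (G.imom_pos hη z).le) (hcont.intervalIntegrable _ _)
  have hd : ∀ z ∈ Set.uIcc (0:ℝ) (2 * ε),
      HasDerivAt (fun z => Real.log (√η + z)) (√η + z)⁻¹ z := by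
    intro z hz
    rw [Set.uIcc_of_le (by positivity)] at hz
    have h := ((hasDerivAt_id z).const_add (√η)).log (by have := hz.1; simp only [id]; positivity)
    simpa using h
  have hci : IntervalIntegrable (fun z => (√η + z)⁻¹) volume 0 (2 * ε) := by
    refine ContinuousOn.intervalIntegrable ?_
    refine ContinuousOn.inv₀ (by fun_prop) ?_
    intro z hz
    rw [Set.uIcc_of_le (by positivity)] at hz
    have := hz.1
    positivity
  have h2 : ∫ z in (0:ℝ)..(2 * ε), (√η + z)⁻¹ ≤ ∫ z in (0:ℝ)..(2 * ε), imom R η z := by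
    refine intervalIntegral.integral_mono_on (by positivity) hci
      (hcont.intervalIntegrable _ _) fun z hz => ?_
    unfold imom
    have hm := G.mom_pos hη z
    have hle : mom R η z ≤ √η + z := by
      refine Real.sqrt_le_iff.2 ⟨by have := hz.1; positivity, ?_⟩
      have hq := G.quad z (by rw [abs_of_nonneg hz.1]; exact hz.2)
      unfold pot
      rw [hq]
      nlinarith [Real.sq_sqrt hη.le, mul_nonneg hs.le hz.1]
    gcongr
  rw [intervalIntegral.integral_eq_sub_of_hasDerivAt hd hci] at h2
  have h3 : Real.log (2 * ε) ≤ Real.log (√η + 2 * ε) :=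
    Real.log_le_log (by positivity) (by linarith)
  rw [add_zero, Real.log_sqrt hη.le] at h2
  linarith

lemma Geo.rate_nonneg (hη : 0 < η) : 0 ≤ rate R a η :=
  div_nonneg (G.totdamp_nonneg hη) (by have := G.tottime_pos hη; positivity)

lemma Geo.rate_mul (hη : 0 < η) : 2 * rate R a η * tottime R η = totdamp R a η := by
  have := (G.tottime_pos hη).ne'
  unfold rate; field_simp

lemma Geo.rate_le (hη : 0 < η) : rate R a η ≤ 1 := by
  have h : totdamp R a η ≤ tottime R η :=
    intervalIntegral.integral_mono_on (by positivity)
      ((G.as.continuous.mul (G.imom_cont hη)).intervalIntegrable _ _)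
      ((G.imom_cont hη).intervalIntegrable _ _)
      fun z _ => mul_le_of_le_one_left (G.imom_pos hη z).le (G.a1 z)
  have := G.tottime_pos hη
  unfold rate
  rw [div_le_one (by positivity)]
  linarith

lemma Geo.wkbB_deriv (hη : 0 < η) (z : ℝ) :
    HasDerivAt (wkbB R a η) (wkbb R a η z) z := by
  have hc : Continuous fun y => (a y - 2 * rate R a η) * imom R η y :=
    (G.as.continuous.sub continuous_const).mul (G.imom_cont hη)
  have h1 : HasDerivAt (fun z => ∫ y in (0:ℝ)..z, (a y - 2 * rate R a η) * imom R η y)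
      ((a z - 2 * rate R a η) * imom R η z) z :=
    intervalIntegral.integral_hasDerivAt_right (hc.intervalIntegrable _ _)
      hc.aestronglyMeasurable.stronglyMeasurableAtFilter hc.continuousAt
  have h2 := ((G.Rs.differentiable (by simp) z).hasDerivAt).log (G.Rpos z).ne'
  have h3 : HasDerivAt (fun z => η + pot R z) (deriv (pot R) z) z :=
    ((G.pot_smooth.differentiable (by simp) z).hasDerivAt).const_add η
  have h4 := h3.log (G.W_pos hη z).ne'
  refine (((h1.const_mul (freq η / 2)).sub (h2.div_const 2)).sub (h4.div_const 4)).congr_deriv ?_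
  unfold wkbb
  rw [← G.mom_sq hη z]
  unfold imom
  have := (G.mom_pos hη z).ne'
  have := (G.Rpos z).ne'
  field_simp
  ring

lemma Geo.wkbB_per (hη : 0 < η) (z : ℝ) : wkbB R a η (z + 2 * Real.pi) = wkbB R a η z := by
  have hc : Continuous fun y => (a y - 2 * rate R a η) * imom R η y :=
    (G.as.continuous.sub continuous_const).mul (G.imom_cont hη)
  have hper : Function.Periodic (fun y => (a y - 2 * rate R a η) * imom R η y) (2 * Real.pi) :=
    fun y => by simp only [G.aper, G.imom_per]
  have h0 : ∫ y in (0:ℝ)..(2 * Real.pi), (a y - 2 * rate R a η) * imom R η y = 0 := by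
    have : ∀ y, (a y - 2 * rate R a η) * imom R η y
        = a y * imom R η y - 2 * rate R a η * imom R η y := fun y => by ring
    simp only [this]
    have ca : Continuous fun y => a y * imom R η y := G.as.continuous.mul (G.imom_cont hη)
    have cp : Continuous fun y => 2 * rate R a η * imom R η y :=
      continuous_const.mul (G.imom_cont hη)
    rw [intervalIntegral.integral_sub (ca.intervalIntegrable _ _) (cp.intervalIntegrable _ _),
      intervalIntegral.integral_const_mul]
    change totdamp R a η - 2 * rate R a η * tottime R η = 0
    rw [G.rate_mul hη, sub_self]
  have h1 : ∫ y in (0:ℝ)..(z + 2 * Real.pi), (a y - 2 * rate R a η) * imom R η y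
      = ∫ y in (0:ℝ)..z, (a y - 2 * rate R a η) * imom R η y := by
    rw [← intervalIntegral.integral_add_adjacent_intervals (b := z)
      (hc.intervalIntegrable _ _) (hc.intervalIntegrable _ _),
      hper.intervalIntegral_add_eq z 0, zero_add, h0, add_zero]
  unfold wkbB
  rw [h1, G.Rper, G.pot_per]

lemma Geo.wkbB_int_bound (hη : 0 < η) (hη1 : η ≤ 1) {z : ℝ} (hz : z ∈ Set.Icc 0 (2 * Real.pi)) :
    |freq η / 2 * ∫ y in (0:ℝ)..z, (a y - 2 * rate R a η) * imom R η y| ≤ Real.pi / ε := by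
  have ca : Continuous fun y => a y * imom R η y := G.as.continuous.mul (G.imom_cont hη)
  have cp := G.imom_cont hη
  have cp' : Continuous fun y => 2 * rate R a η * imom R η y := continuous_const.mul cp
  have hν := G.rate_nonneg hη
  have e : ∫ y in (0:ℝ)..z, (a y - 2 * rate R a η) * imom R η y
      = (∫ y in (0:ℝ)..z, a y * imom R η y)
        - 2 * rate R a η * ∫ y in (0:ℝ)..z, imom R η y := by
    rw [← intervalIntegral.integral_const_mul, ← intervalIntegral.integral_sub
      (ca.intervalIntegrable _ _) (cp'.intervalIntegrable _ _)]
    exact intervalIntegral.integral_congr fun y _ => by ring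
  have b1 : ∫ y in (0:ℝ)..z, a y * imom R η y ≤ totdamp R a η :=
    intervalIntegral.integral_mono_interval le_rfl hz.1 hz.2
      (Filter.Eventually.of_forall fun z => mul_nonneg (G.a0 z) (G.imom_pos hη z).le)
      (ca.intervalIntegrable _ _)
  have b2 : ∫ y in (0:ℝ)..z, imom R η y ≤ tottime R η :=
    intervalIntegral.integral_mono_interval le_rfl hz.1 hz.2
      (Filter.Eventually.of_forall fun z => (G.imom_pos hη z).le) (cp.intervalIntegrable _ _)
  have b3 : 0 ≤ ∫ y in (0:ℝ)..z, a y * imom R η y :=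
    intervalIntegral.integral_nonneg hz.1 fun y _ => mul_nonneg (G.a0 y) (G.imom_pos hη y).le
  have b4 : 0 ≤ ∫ y in (0:ℝ)..z, imom R η y :=
    intervalIntegral.integral_nonneg hz.1 fun y _ => (G.imom_pos hη y).le
  have b5 : 2 * rate R a η * (∫ y in (0:ℝ)..z, imom R η y) ≤ totdamp R a η := by
    rw [← G.rate_mul hη]; gcongr
  have b6 : 0 ≤ 2 * rate R a η * (∫ y in (0:ℝ)..z, imom R η y) := by positivity
  have hN := G.totdamp_le hη
  have hs0 : 0 ≤ freq η := Real.sqrt_nonneg _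
  have hs := freq_le hη1
  rw [e, abs_mul, abs_of_nonneg (by positivity : 0 ≤ freq η / 2)]
  have b7 : |(∫ y in (0:ℝ)..z, a y * imom R η y)
      - 2 * rate R a η * ∫ y in (0:ℝ)..z, imom R η y| ≤ Real.pi / ε :=
    abs_le.2 ⟨by linarith, by linarith⟩
  calc _ ≤ 1 * (Real.pi / ε) := by gcongr; linarith
    _ = _ := one_mul _

/-- The WKB amplitude is bounded below, and above by a multiple of `1 / η`. -/
lemma Geo.wkbB_bounds : ∃ c : ℝ, 0 < c ∧ ∃ C : ℝ, 0 ≤ C ∧ ∀ η, 0 < η → η ≤ 1 → ∀ z,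
    c ≤ Real.exp (wkbB R a η z) ∧ Real.exp (wkbB R a η z) ≤ C * η⁻¹ := by
  obtain ⟨CR, -, hCR⟩ := periodic_bounded G.Rs.continuous G.Rper
  refine ⟨Real.exp (-(Real.pi / ε) - Real.log CR / 2 - Real.log 2 / 4), Real.exp_pos _,
    Real.exp (Real.pi / ε), (Real.exp_pos _).le, fun η hη hη1 z => ?_⟩
  obtain ⟨y, hy, hyz⟩ := Function.Periodic.exists_mem_Ico₀ (f := wkbB R a η)
    (G.wkbB_per hη) (by positivity) z
  rw [hyz]
  have h1 := abs_le.1 (G.wkbB_int_bound hη hη1 ⟨hy.1, hy.2.le⟩)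
  have h2 : 0 ≤ Real.log (R y) := Real.log_nonneg (G.R1 y)
  have h3 : Real.log (R y) ≤ Real.log CR :=
    Real.log_le_log (G.Rpos y) ((le_abs_self _).trans (hCR y))
  have h4 : Real.log η ≤ Real.log (η + pot R y) :=
    Real.log_le_log hη (by linarith [G.pot_nonneg y])
  have h5 : Real.log (η + pot R y) ≤ Real.log 2 :=
    Real.log_le_log (G.W_pos hη y) (by linarith [G.pot_le y])
  have h6 : Real.log η ≤ 0 := Real.log_nonpos hη.le hη1
  constructor
  · apply Real.exp_le_exp.2
    unfold wkbB
    linarith [h1.1]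
  · have : Real.exp (Real.pi / ε) * η⁻¹ = Real.exp (Real.pi / ε - Real.log η) := by
      rw [Real.exp_sub, Real.exp_log hη, div_eq_mul_inv (Real.exp _)]
    rw [this]
    apply Real.exp_le_exp.2
    unfold wkbB
    linarith [h1.2]

/-- Bohr–Sommerfeld quantization: near a prescribed energy level, some level makes the total phase
a multiple of `2π`. -/
lemma Geo.quantize {M : ℝ} (hM : 2 ≤ M) {m : ℝ} (hm : 4 * M ≤ m) :
    ∃ η, 1 / M ≤ η ∧ η ≤ 2 / M ∧ ∃ n : ℤ,
      m * (∫ z in (0:ℝ)..(2 * Real.pi), mom R η z) = 2 * Real.pi * n := by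
  have hM0 : 0 < M := by linarith
  set Φ : ℝ → ℝ := fun η => m * ∫ z in (0:ℝ)..(2 * Real.pi), mom R η z with hΦ
  have hcont : Continuous Φ := by
    refine continuous_const.mul ?_
    refine intervalIntegral.continuous_parametric_intervalIntegral_of_continuous' ?_ _ _
    have := G.pot_smooth.continuous
    unfold Function.uncurry mom
    fun_prop
  have hle : 1 / M ≤ 2 / M := by gcongr; norm_num
  have hgap : Φ (1 / M) + 2 * Real.pi ≤ Φ (2 / M) := by
    have hpt : ∀ z, mom R (1 / M) z + 1 / (4 * M) ≤ mom R (2 / M) z := by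
      intro z
      have h1 := G.mom_sq (η := 1 / M) (by positivity) z
      have h2 := G.mom_sq (η := 2 / M) (by positivity) z
      have p1 := G.mom_pos (η := 1 / M) (by positivity) z
      have p2 := G.mom_pos (η := 2 / M) (by positivity) z
      have h3 : 2 / M ≤ 1 := by rw [div_le_one hM0]; exact hM
      have hp := G.pot_le z
      have u2 : mom R (2 / M) z ≤ 2 := by nlinarith
      have u1 : mom R (1 / M) z ≤ 2 := by nlinarith
      have h4 : (mom R (2 / M) z - mom R (1 / M) z) * (mom R (2 / M) z + mom R (1 / M) z)
          = 1 / M := by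
        have : 2 / M = 1 / M + 1 / M := by ring
        rw [this] at h2 ⊢
        nlinarith
      have h5 : 0 ≤ mom R (2 / M) z - mom R (1 / M) z := by
        by_contra hneg
        push Not at hneg
        have : 0 < 1 / M := by positivity
        nlinarith
      have h6 : 1 / (4 * M) = 1 / M / 4 := by field_simp
      have h7 : (mom R (2 / M) z - mom R (1 / M) z) * (mom R (2 / M) z + mom R (1 / M) z)
          ≤ (mom R (2 / M) z - mom R (1 / M) z) * 4 := by
        gcongr; linarith
      rw [h6]
      linarith
    have hI : (∫ z in (0:ℝ)..(2 * Real.pi), (mom R (1 / M) z + 1 / (4 * M)))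
        ≤ ∫ z in (0:ℝ)..(2 * Real.pi), mom R (2 / M) z :=
      intervalIntegral.integral_mono_on (by positivity)
      ((G.mom_cont.add continuous_const).intervalIntegrable _ _)
      (G.mom_cont.intervalIntegrable _ _) (fun z _ => hpt z)
    rw [intervalIntegral.integral_add (G.mom_cont.intervalIntegrable _ _)
      (continuous_const.intervalIntegrable _ _)] at hI
    simp only [intervalIntegral.integral_const, sub_zero, smul_eq_mul] at hI
    have hm0 : 0 < m := by linarith
    have h7 : 2 * Real.pi ≤ m * (2 * Real.pi * (1 / (4 * M))) := by
      have : 1 ≤ m * (1 / (4 * M)) := by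
        rw [mul_one_div, le_div_iff₀ (by positivity)]; linarith
      nlinarith [Real.pi_pos]
    have h8 := mul_le_mul_of_nonneg_left hI hm0.le
    simp only [hΦ]
    linarith
  set n : ℤ := ⌈Φ (1 / M) / (2 * Real.pi)⌉ with hn
  have n1 : Φ (1 / M) ≤ 2 * Real.pi * n := by
    have := Int.le_ceil (Φ (1 / M) / (2 * Real.pi))
    rw [div_le_iff₀ (by positivity)] at this
    linarith
  have n2 : 2 * Real.pi * n ≤ Φ (2 / M) := by
    have := (Int.ceil_lt_add_one (Φ (1 / M) / (2 * Real.pi))).le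
    rw [← sub_le_iff_le_add, le_div_iff₀ (by positivity)] at this
    linarith
  obtain ⟨η, hη, he⟩ := intermediate_value_Icc hle hcont.continuousOn ⟨n1, n2⟩
  exact ⟨η, hη.1, hη.2, n, he⟩

/-- The decay rate of the quasimode is logarithmically small. -/
lemma Geo.rate_log : ∃ M0 : ℝ, 2 ≤ M0 ∧ ∀ M, M0 ≤ M → ∀ η, 0 < η → η ≤ 2 / M →
    rate R a η * Real.log M ≤ 2 * (Real.pi / ε) := by
  have he := G.eps_pos
  refine ⟨max 2 (Real.exp (2 * Real.log 2 - 4 * Real.log (2 * ε))), le_max_left _ _,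
    fun M hM η hη hηM => ?_⟩
  have hM2 : 2 ≤ M := (le_max_left _ _).trans hM
  have hM0 : 0 < M := by linarith
  have h1 : 2 * Real.log 2 - 4 * Real.log (2 * ε) ≤ Real.log M := by
    rw [Real.le_log_iff_exp_le hM0]; exact (le_max_right _ _).trans hM
  have h2 : Real.log η ≤ Real.log 2 - Real.log M := by
    rw [← Real.log_div (by norm_num) hM0.ne']
    exact Real.log_le_log hη hηM
  have h3 := G.tottime_ge hη
  have h4 : Real.log M ≤ 4 * tottime R η := by linarith
  have h5 := G.rate_mul hη
  have h6 := G.totdamp_le hη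
  have h7 := G.rate_nonneg hη
  nlinarith

end geo

/-! ### Separated functions and comparison with exact solutions -/

/-- The separated function `e^{λt} v(z) e^{imθ}`. -/
def mode (lam : ℂ) (v : ℝ → ℂ) (m : ℤ) (t z θ : ℝ) : ℂ :=
  Complex.exp (lam * (t : ℂ)) * (v z * Complex.exp (Complex.I * ((m : ℂ) * (θ : ℂ))))

lemma mode_smooth (lam : ℂ) {v : ℝ → ℂ} (hv : ContDiff ℝ (⊤ : ℕ∞) v) (m : ℤ) :
    Smooth3 (mode lam v m) := by
  have h0 : ContDiff ℝ (⊤ : ℕ∞) (fun x : ℝ => (x : ℂ)) := Complex.ofRealCLM.contDiff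
  have h1 : ContDiff ℝ (⊤ : ℕ∞) (fun p : ℝ × ℝ × ℝ => (p.1 : ℂ)) := h0.comp contDiff_fst
  have h2 : ContDiff ℝ (⊤ : ℕ∞) (fun p : ℝ × ℝ × ℝ => v p.2.1) :=
    hv.comp (contDiff_fst.comp contDiff_snd)
  have h3 : ContDiff ℝ (⊤ : ℕ∞) (fun p : ℝ × ℝ × ℝ => (p.2.2 : ℂ)) :=
    h0.comp (contDiff_snd.comp contDiff_snd)
  exact ((contDiff_const.mul h1).cexp).mul
    (h2.mul ((contDiff_const.mul (contDiff_const.mul h3)).cexp))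

lemma exp_mode_per (m : ℤ) (θ : ℝ) :
    Complex.exp (Complex.I * ((m : ℂ) * ((θ + 2 * Real.pi : ℝ) : ℂ)))
      = Complex.exp (Complex.I * ((m : ℂ) * (θ : ℂ))) := by
  have : Complex.I * ((m : ℂ) * ((θ + 2 * Real.pi : ℝ) : ℂ))
      = Complex.I * ((m : ℂ) * (θ : ℂ)) + (m : ℂ) * (2 * Real.pi * Complex.I) := by
    push_cast; ring
  rw [this, Complex.exp_add, Complex.exp_int_mul_two_pi_mul_I, mul_one]

lemma mode_per (lam : ℂ) {v : ℝ → ℂ} (hv : ∀ z, v (z + 2 * Real.pi) = v z) (m : ℤ) :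
    Per3 (mode lam v m) := fun t z θ => by
  unfold mode
  rw [hv, exp_mode_per]
  exact ⟨rfl, rfl⟩

lemma pt_mode (lam : ℂ) (v : ℝ → ℂ) (m : ℤ) (t z θ : ℝ) :
    HasDerivAt (fun s => mode lam v m s z θ) (lam * mode lam v m t z θ) t := by
  have h := (((Complex.ofRealCLM.hasDerivAt (x := t)).const_mul lam).cexp).mul_const
    (v z * Complex.exp (Complex.I * ((m : ℂ) * (θ : ℂ))))
  refine h.congr_deriv ?_
  simp [mode]; ring

lemma norm_mode (lam : ℂ) (v : ℝ → ℂ) (m : ℤ) (t z θ : ℝ) :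
    ‖mode lam v m t z θ‖ = Real.exp (lam.re * t) * ‖v z‖ := by
  unfold mode
  rw [norm_mul, norm_mul, Complex.norm_exp, Complex.norm_exp]
  simp

/-- The residual of the WKB ansatz: if `q` satisfies the eikonal equation and `b` the transport
equation, only terms independent of the frequency `m` survive. -/
lemma mode_residual {R : ℝ → ℝ} (hR : ContDiff ℝ (⊤ : ℕ∞) R) (hR1 : ∀ z, 1 ≤ R z)
    {b b' q q' v : ℝ → ℂ} {s ν : ℂ} {m : ℤ} {α : ℂ}
    (hv : ∀ z, HasDerivAt v ((b z + Complex.I * m * q z) * v z) z)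
    (hb : ∀ z, HasDerivAt b (b' z) z) (hq : ∀ z, HasDerivAt q (q' z) z)
    (t z θ : ℝ) (E1 : s ^ 2 = q z ^ 2 + ((R z : ℂ) ^ 2)⁻¹)
    (E2 : s * (α - 2 * ν) = q' z + 2 * b z * q z + ((deriv R z : ℝ) : ℂ) / (R z : ℂ) * q z) :
    pt (pt (mode (Complex.I * m * s - ν) v m)) t z θ
      - lapg R (fun w p => mode (Complex.I * m * s - ν) v m t w p) z θ
      + α * pt (mode (Complex.I * m * s - ν) v m) t z θ
    = (ν ^ 2 - α * ν - b' z - b z ^ 2 - ((deriv R z : ℝ) : ℂ) / (R z : ℂ) * b z)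
      * mode (Complex.I * m * s - ν) v m t z θ := by
  set lam : ℂ := Complex.I * m * s - ν with hlam
  have hRz : (R z : ℂ) ≠ 0 := by
    have := hR1 z
    exact_mod_cast (by positivity : R z ≠ 0)
  have e1 : ∀ t z θ, pt (mode lam v m) t z θ = lam * mode lam v m t z θ :=
    fun t z θ => (pt_mode lam v m t z θ).deriv
  have e2 : pt (pt (mode lam v m)) t z θ = lam * (lam * mode lam v m t z θ) := by
    have : pt (mode lam v m) = fun t z θ => lam * mode lam v m t z θ := by
      funext t z θ; exact e1 t z θ
    rw [this]
    exact ((pt_mode lam v m t z θ).const_mul lam).deriv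
  have d1 : ∀ w, HasDerivAt (fun w => mode lam v m t w θ)
      ((b w + Complex.I * m * q w) * mode lam v m t w θ) w := by
    intro w
    refine (((hv w).mul_const (Complex.exp (Complex.I * ((m : ℂ) * (θ : ℂ))))).const_mul
      (Complex.exp (lam * (t : ℂ)))).congr_deriv ?_
    unfold mode; ring
  have dR : HasDerivAt (fun w => (R w : ℂ)) ((deriv R z : ℝ) : ℂ) z :=
    ((hR.differentiable (by simp) z).hasDerivAt).ofReal_comp
  have d2 := dR.mul (((hb z).add ((hq z).const_mul (Complex.I * m))).mul (d1 z))
  have d3 : ∀ p, HasDerivAt (fun p => mode lam v m t z p)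
      (Complex.I * m * mode lam v m t z p) p := by
    intro p
    have h := ((((Complex.ofRealCLM.hasDerivAt (x := p)).const_mul (m : ℂ)).const_mul
      Complex.I).cexp.const_mul (v z)).const_mul (Complex.exp (lam * (t : ℂ)))
    refine h.congr_deriv ?_
    simp [mode]; ring
  have e3 : lapg R (fun w p => mode lam v m t w p) z θ
      = (R z : ℂ)⁻¹ * (((deriv R z : ℝ) : ℂ) * ((b z + Complex.I * m * q z) * mode lam v m t z θ)
        + (R z : ℂ) * ((b' z + Complex.I * m * q' z) * mode lam v m t z θ
          + (b z + Complex.I * m * q z) * ((b z + Complex.I * m * q z) * mode lam v m t z θ)))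
        + ((R z : ℂ) ^ 2)⁻¹ * (Complex.I * m * (Complex.I * m * mode lam v m t z θ)) := by
    unfold lapg
    have f1 : (fun w : ℝ => (R w : ℂ) * deriv (fun w' : ℝ => mode lam v m t w' θ) w)
        = fun w => (R w : ℂ) * ((b w + Complex.I * m * q w) * mode lam v m t w θ) :=
      funext fun w => by rw [(d1 w).deriv]
    have f2 : (fun p : ℝ => deriv (fun p' : ℝ => mode lam v m t z p') p)
        = fun p => Complex.I * m * mode lam v m t z p := funext fun p => (d3 p).deriv
    rw [f1, f2, ((d3 θ).const_mul _).deriv]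
    congr 1
    congr 1
    exact d2.deriv
  rw [e1, e2, e3]
  set X := mode lam v m t z θ
  have hcancel : (R z : ℂ)⁻¹ * (R z : ℂ) = 1 := inv_mul_cancel₀ hRz
  have hI : Complex.I ^ 2 = -1 := Complex.I_sq
  have E1' : ((R z : ℂ) ^ 2)⁻¹ = s ^ 2 - q z ^ 2 := by rw [E1]; ring
  rw [E1', hlam]
  rw [div_eq_mul_inv] at E2 ⊢
  set ri := (R z : ℂ)⁻¹
  linear_combination (-((b' z + Complex.I * m * q' z) * X
          + (b z + Complex.I * m * q z) * ((b z + Complex.I * m * q z) * X))) * hcancel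
    + Complex.I * m * X * E2

/-- The kinetic energy density of a difference is controlled by the two energies. -/
lemma kinetic_le {R : ℝ → ℝ} (hR : Continuous R) (hR1 : ∀ z, 1 ≤ R z)
    {u d : ℝ → ℝ → ℝ → ℂ} (hu : Smooth3 u) (hd : Smooth3 d) {μ t : ℝ}
    (h : ∀ z θ, μ ≤ ‖pt u t z θ - pt d t z θ‖ ^ 2) :
    (2 * Real.pi) ^ 2 * μ ≤ 2 * energy R u t + 2 * energy R d t := by
  have cu := edens_slice hR hR1 hu t
  have cd := edens_slice hR hR1 hd t
  rw [energy_eq_cell, energy_eq_cell, ← cell_const_mul, ← cell_const_mul, ← cell_add,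
    ← cell_const]
  rotate_left
  · exact continuous_const.mul cu
  · exact continuous_const.mul cd
  refine cell_mono continuous_const ((continuous_const.mul cu).add (continuous_const.mul cd))
    fun z θ => (h z θ).trans ?_
  have key : ∀ w : ℝ → ℝ → ℝ → ℂ, ‖pt w t z θ‖ ^ 2 ≤ edens R w t z θ := by
    intro w
    have hr := hR1 z
    have h1 : 0 ≤ ‖pz w t z θ‖ ^ 2 + ((R z) ^ 2)⁻¹ * ‖pθ w t z θ‖ ^ 2 := by positivity
    unfold edens
    nlinarith [sq_nonneg ‖pt w t z θ‖]
  have h1 := key u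
  have h2 := key d
  have h3 := norm_sub_le (pt u t z θ) (pt d t z θ)
  have h4 : ‖pt u t z θ - pt d t z θ‖ ^ 2 ≤ (‖pt u t z θ‖ + ‖pt d t z θ‖) ^ 2 := by gcongr
  nlinarith [sq_nonneg (‖pt u t z θ‖ - ‖pt d t z θ‖)]

/-- Comparison of an exact solution with an approximate one having the same data. -/
lemma energy_lower {R a : ℝ → ℝ} (hR : ContDiff ℝ (⊤ : ℕ∞) R)
    (hRper : ∀ z, R (z + 2 * Real.pi) = R z) (hR1 : ∀ z, 1 ≤ R z)
    (ha : ∀ z, 0 ≤ a z) {CR : ℝ} (hCR : ∀ z, R z ≤ CR)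
    {U u : ℝ → ℝ → ℝ → ℂ} (hU : Smooth3 U) (hUp : Per3 U)
    (hu : IsWaveSol R a u (U 0) (pt U 0)) {Γ μ T : ℝ} (hT : 0 < T)
    (hres : ∀ t, 0 ≤ t → ∀ z θ, ‖pt (pt U) t z θ - lapg R (fun w p => U t w p) z θ
      + (a z : ℂ) * pt U t z θ‖ ≤ Γ)
    (hμ : ∀ z θ, μ ≤ ‖pt U T z θ‖ ^ 2) :
    (2 * Real.pi) ^ 2 * μ ≤
      2 * energy R u T + 2 * (3 * T ^ 2 * Γ ^ 2 * ((2 * Real.pi) ^ 2 * CR)) := by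
  obtain ⟨su, pu, eq, i0, i1⟩ := hu
  have su : Smooth3 u := su
  set d : ℝ → ℝ → ℝ → ℂ := fun t z θ => u t z θ - U t z θ with hd
  have sd : Smooth3 d := ContDiff.sub su hU
  have pd : Per3 d := fun t z θ => by
    simp only [hd]
    rw [(pu t z θ).1, (pu t z θ).2, (hUp t z θ).1, (hUp t z θ).2]; exact ⟨rfl, rfl⟩
  have ept : pt d = fun t z θ => pt u t z θ - pt U t z θ := by
    funext t z θ
    exact ((su.hasDerivAt_t t z θ).sub (hU.hasDerivAt_t t z θ)).deriv
  have eptt : ∀ t z θ, pt (pt d) t z θ = pt (pt u) t z θ - pt (pt U) t z θ := by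
    intro t z θ
    rw [ept]
    exact ((su.pt.hasDerivAt_t t z θ).sub (hU.pt.hasDerivAt_t t z θ)).deriv
  have epz : ∀ t z θ, pz d t z θ = pz u t z θ - pz U t z θ := fun t z θ =>
    ((su.hasDerivAt_z t z θ).sub (hU.hasDerivAt_z t z θ)).deriv
  have epθ : ∀ t z θ, pθ d t z θ = pθ u t z θ - pθ U t z θ := fun t z θ =>
    ((su.hasDerivAt_θ t z θ).sub (hU.hasDerivAt_θ t z θ)).deriv
  have elap : ∀ t z θ, lapg R (fun w p => d t w p) z θ
      = lapg R (fun w p => u t w p) z θ - lapg R (fun w p => U t w p) z θ := by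
    intro t z θ
    have dR : DifferentiableAt ℝ (fun w => (R w : ℂ)) z :=
      ((hR.differentiable (by simp) z).hasDerivAt).ofReal_comp.differentiableAt
    have a1 : deriv (fun w : ℝ => (R w : ℂ) * pz d t w θ) z
        = deriv (fun w : ℝ => (R w : ℂ) * pz u t w θ) z
          - deriv (fun w : ℝ => (R w : ℂ) * pz U t w θ) z := by
      have : (fun w : ℝ => (R w : ℂ) * pz d t w θ)
          = fun w => (R w : ℂ) * pz u t w θ - (R w : ℂ) * pz U t w θ :=
        funext fun w => by rw [epz]; ring
      rw [this]
      exact deriv_fun_sub (dR.mul (su.pz.hasDerivAt_z t z θ).differentiableAt)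
        (dR.mul (hU.pz.hasDerivAt_z t z θ).differentiableAt)
    have a2 : deriv (fun p : ℝ => pθ d t z p) θ
        = deriv (fun p : ℝ => pθ u t z p) θ - deriv (fun p : ℝ => pθ U t z p) θ := by
      have : (fun p : ℝ => pθ d t z p) = fun p => pθ u t z p - pθ U t z p :=
        funext fun p => epθ t z p
      rw [this]
      exact deriv_fun_sub (su.pθ.hasDerivAt_θ t z θ).differentiableAt
        (hU.pθ.hasDerivAt_θ t z θ).differentiableAt
    change (R z : ℂ)⁻¹ * deriv (fun w : ℝ => (R w : ℂ) * pz d t w θ) z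
        + ((R z : ℂ) ^ 2)⁻¹ * deriv (fun p : ℝ => pθ d t z p) θ
      = ((R z : ℂ)⁻¹ * deriv (fun w : ℝ => (R w : ℂ) * pz u t w θ) z
        + ((R z : ℂ) ^ 2)⁻¹ * deriv (fun p : ℝ => pθ u t z p) θ)
      - ((R z : ℂ)⁻¹ * deriv (fun w : ℝ => (R w : ℂ) * pz U t w θ) z
        + ((R z : ℂ) ^ 2)⁻¹ * deriv (fun p : ℝ => pθ U t z p) θ)
    rw [a1, a2]; ring
  have hest : energy R d T ≤ 3 * T ^ 2 * Γ ^ 2 * ((2 * Real.pi) ^ 2 * CR) := by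
    refine energy_est hR hRper hR1 ha hCR sd pd hT ?_ ?_ ?_
    · intro t ht z θ
      have h1 : pt (pt u) t z θ - lapg R (fun w p => u t w p) z θ
        + (a z : ℂ) * pt u t z θ = 0 := eq t ht z θ
      rw [eptt, elap, ept]
      have h2 : pt (pt u) t z θ - pt (pt U) t z θ
          - (lapg R (fun w p => u t w p) z θ - lapg R (fun w p => U t w p) z θ)
          + (a z : ℂ) * (pt u t z θ - pt U t z θ)
          = -(pt (pt U) t z θ - lapg R (fun w p => U t w p) z θ + (a z : ℂ) * pt U t z θ) := by
        linear_combination h1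
      rw [h2, norm_neg]
      exact hres t ht z θ
    · intro z θ; simp only [hd]; rw [i0]; ring
    · intro z θ
      have h3 : pt u 0 z θ = pt U 0 z θ := i1 z θ
      rw [ept]
      simp only [h3, sub_self]
  have hk := kinetic_le hR.continuous hR1 su sd (μ := μ) (t := T) fun z θ => by
    rw [ept]; simpa using hμ z θ
  linarith

/-! ### The WKB profiles as polynomially bounded families -/

/-- The admissible excess energy levels `η`. -/
abbrev Level : Type := {η : ℝ // 0 < η ∧ η ≤ 1}

/-- The WKB profile `exp (B + i m ∫ q)`. -/
def wkbv (R a : ℝ → ℝ) (η m z : ℝ) : ℂ :=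
  Complex.exp ((wkbB R a η z : ℂ) + Complex.I * m * ((∫ y in (0:ℝ)..z, mom R η y : ℝ) : ℂ))

lemma norm_wkbv (R a : ℝ → ℝ) (η m z : ℝ) : ‖wkbv R a η m z‖ = Real.exp (wkbB R a η z) := by
  unfold wkbv
  rw [Complex.norm_exp]
  simp

section wkb
variable {ε : ℝ} {R a : ℝ → ℝ} (G : Geo ε R a)
include G

lemma Geo.wkbv_deriv {η : ℝ} (hη : 0 < η) (m z : ℝ) :
    HasDerivAt (wkbv R a η m)
      (((wkbb R a η z : ℂ) + Complex.I * m * (mom R η z : ℂ)) * wkbv R a η m z) z := by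
  have h1 := (G.wkbB_deriv hη z).ofReal_comp
  have h2 : HasDerivAt (fun z => ∫ y in (0:ℝ)..z, mom R η y) (mom R η z) z :=
    intervalIntegral.integral_hasDerivAt_right (G.mom_cont.intervalIntegrable _ _)
      G.mom_cont.aestronglyMeasurable.stronglyMeasurableAtFilter G.mom_cont.continuousAt
  have h3 := (h1.add (h2.ofReal_comp.const_mul (Complex.I * m))).cexp
  refine h3.congr_deriv ?_
  unfold wkbv
  exact mul_comm _ _

lemma Geo.wkbv_per {η m : ℝ} (hη : 0 < η) {n : ℤ}
    (hn : m * (∫ z in (0:ℝ)..(2 * Real.pi), mom R η z) = 2 * Real.pi * n) (z : ℝ) :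
    wkbv R a η m (z + 2 * Real.pi) = wkbv R a η m z := by
  have hper : Function.Periodic (mom R η) (2 * Real.pi) := fun y => G.mom_per y
  have h1 : ∫ y in (0:ℝ)..(z + 2 * Real.pi), mom R η y
      = (∫ y in (0:ℝ)..z, mom R η y) + ∫ y in (0:ℝ)..(2 * Real.pi), mom R η y := by
    rw [← intervalIntegral.integral_add_adjacent_intervals (b := z)
      (G.mom_cont.intervalIntegrable _ _) (G.mom_cont.intervalIntegrable _ _),
      hper.intervalIntegral_add_eq z 0, zero_add]
  have hn' : (m : ℂ) * ((∫ y in (0:ℝ)..(2 * Real.pi), mom R η y : ℝ) : ℂ)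
      = 2 * (Real.pi : ℂ) * (n : ℂ) := by exact_mod_cast hn
  unfold wkbv
  rw [h1, G.wkbB_per hη]
  have : (wkbB R a η z : ℂ) + Complex.I * m * (((∫ y in (0:ℝ)..z, mom R η y)
      + ∫ y in (0:ℝ)..(2 * Real.pi), mom R η y : ℝ) : ℂ)
      = ((wkbB R a η z : ℂ) + Complex.I * m * ((∫ y in (0:ℝ)..z, mom R η y : ℝ) : ℂ))
        + (n : ℂ) * (2 * Real.pi * Complex.I) := by
    push_cast
    linear_combination Complex.I * hn'
  rw [this, Complex.exp_add, Complex.exp_int_mul_two_pi_mul_I, mul_one]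

lemma Geo.pb_imom (k : ℕ) :
    PB (fun i : Level => i.1⁻¹) k (fun i z => ((imom R i.1 z : ℝ) : ℂ)) := by
  have hL : ∀ i : Level, 1 ≤ i.1⁻¹ := fun i => (one_le_inv₀ i.2.1).2 i.2.2
  refine PB.bootstrap (g' := fun i z =>
      (-(1 / 2) : ℂ) * ((deriv (pot R) z : ℝ) : ℂ) * ((imom R i.1 z : ℝ) : ℂ)
        * ((imom R i.1 z : ℝ) : ℂ) * ((imom R i.1 z : ℝ) : ℂ)) ?_ ?_ ?_ k
  · refine ⟨fun i => Complex.continuous_ofReal.comp (G.imom_cont i.2.1), 1, 1, zero_le_one,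
      fun i z => ?_⟩
    have hm : i.1 ≤ mom R i.1 z := by
      refine Real.le_sqrt_of_sq_le ?_
      have := i.2.1
      have := i.2.2
      nlinarith [G.pot_nonneg z]
    rw [Complex.norm_real, Real.norm_of_nonneg (G.imom_pos i.2.1 z).le, one_mul, pow_one]
    exact inv_anti₀ i.2.1 hm
  · intro i z
    refine (G.imom_deriv i.2.1 z).ofReal_comp.congr_deriv ?_
    push_cast; ring
  · intro k h
    have hw : PB (fun i : Level => i.1⁻¹) k (fun _ z => ((deriv (pot R) z : ℝ) : ℂ)) :=
      PB.fixed (contDiff_infty_iff_deriv.1 G.pot_smooth).2 (deriv_periodic G.pot_per)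
    have hc : PB (fun i : Level => i.1⁻¹) k (fun _ _ => (-(1 / 2) : ℂ)) :=
      PB.const _ 1 0 zero_le_one (fun i => by norm_num) k
    exact ((((hc.mul hL hw).mul hL h).mul hL h).mul hL h)

lemma Geo.pb_mom (k : ℕ) :
    PB (fun i : Level => i.1⁻¹) k (fun i z => ((mom R i.1 z : ℝ) : ℂ)) := by
  have hL : ∀ i : Level, 1 ≤ i.1⁻¹ := fun i => (one_le_inv₀ i.2.1).2 i.2.2
  have hc : PB (fun i : Level => i.1⁻¹) k (fun i _ => ((i.1 : ℝ) : ℂ)) :=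
    PB.const _ 1 0 zero_le_one (fun i => by
      rw [Complex.norm_real, Real.norm_of_nonneg i.2.1.le]; simpa using i.2.2) k
  have hw : PB (fun i : Level => i.1⁻¹) k (fun _ z => ((pot R z : ℝ) : ℂ)) :=
    PB.fixed G.pot_smooth G.pot_per
  have h := (hc.add hL hw).mul hL (G.pb_imom k)
  convert h using 3 with i z
  rw [← Complex.ofReal_add, ← Complex.ofReal_mul, ← G.mom_sq i.2.1 z]
  congr 1
  rw [pow_two, mul_assoc, G.mom_mul_imom i.2.1, mul_one]

lemma Geo.pb_rate (k : ℕ) :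
    PB (fun i : Level => i.1⁻¹) k (fun i _ => ((rate R a i.1 : ℝ) : ℂ)) :=
  PB.const _ 1 0 zero_le_one (fun i => by
    rw [Complex.norm_real, Real.norm_of_nonneg (G.rate_nonneg i.2.1)]
    simpa using G.rate_le i.2.1) k

lemma Geo.pb_rho (k : ℕ) :
    PB (fun i : Level => i.1⁻¹) k (fun _ z => ((deriv R z / R z : ℝ) : ℂ)) :=
  PB.fixed ((contDiff_infty_iff_deriv.1 G.Rs).2.div G.Rs fun z => (G.Rpos z).ne') fun z => by
    rw [deriv_periodic G.Rper, G.Rper]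

lemma Geo.pb_wkbb (k : ℕ) :
    PB (fun i : Level => i.1⁻¹) k (fun i z => ((wkbb R a i.1 z : ℝ) : ℂ)) := by
  have hL : ∀ i : Level, 1 ≤ i.1⁻¹ := fun i => (one_le_inv₀ i.2.1).2 i.2.2
  have hcst : ∀ c : ℂ, PB (fun i : Level => i.1⁻¹) k (fun _ _ => c) := fun c =>
    PB.const _ ‖c‖ 0 (norm_nonneg c) (fun i => by simp) k
  have hs : PB (fun i : Level => i.1⁻¹) k (fun i _ => ((freq i.1 : ℝ) : ℂ)) :=
    PB.const _ 2 0 zero_le_two (fun i => by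
      have h0 : 0 ≤ freq i.1 := Real.sqrt_nonneg _
      rw [Complex.norm_real, Real.norm_of_nonneg h0]
      simpa using freq_le i.2.2) k
  have ha : PB (fun i : Level => i.1⁻¹) k (fun _ z => ((a z : ℝ) : ℂ)) := PB.fixed G.as G.aper
  have hw : PB (fun i : Level => i.1⁻¹) k (fun _ z => ((deriv (pot R) z : ℝ) : ℂ)) :=
    PB.fixed (contDiff_infty_iff_deriv.1 G.pot_smooth).2 (deriv_periodic G.pot_per)
  have hP := G.pb_imom k
  have h := (((hs.mul hL (ha.add hL ((hcst (-2)).mul hL (G.pb_rate k)))).mul hL hP).mul hL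
    (hcst (1 / 2))).add hL ((((hw.mul hL hP).mul hL hP).mul hL (hcst (-1 / 4))).add hL
      ((G.pb_rho k).mul hL (hcst (-1 / 2))))
  convert h using 3 with i z
  unfold wkbb
  push_cast
  ring

/-- The residual of the quasimode is polynomially bounded in `1/η`, uniformly in the frequency. -/
lemma Geo.residual_bound : ∃ b' : Level → ℝ → ℂ,
    (∀ i z, HasDerivAt (fun z => ((wkbb R a i.1 z : ℝ) : ℂ)) (b' i z) z) ∧
    ∃ C : ℝ, ∃ K : ℕ, 0 ≤ C ∧ ∀ (i : Level) z,
      ‖((rate R a i.1 : ℝ) : ℂ) ^ 2 - ((a z : ℝ) : ℂ) * ((rate R a i.1 : ℝ) : ℂ) - b' i z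
        - ((wkbb R a i.1 z : ℝ) : ℂ) ^ 2
        - ((deriv R z : ℝ) : ℂ) / ((R z : ℝ) : ℂ) * ((wkbb R a i.1 z : ℝ) : ℂ)‖
        ≤ C * i.1⁻¹ ^ K := by
  have hL : ∀ i : Level, 1 ≤ i.1⁻¹ := fun i => (one_le_inv₀ i.2.1).2 i.2.2
  have hb0 := G.pb_wkbb 0
  obtain ⟨-, b', hb', pb'⟩ := G.pb_wkbb 1
  refine ⟨b', hb', ?_⟩
  have hcst : PB (fun i : Level => i.1⁻¹) 0 (fun _ _ => (-1 : ℂ)) :=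
    PB.const _ 1 0 zero_le_one (fun i => by simp) 0
  have ha : PB (fun i : Level => i.1⁻¹) 0 (fun _ z => ((a z : ℝ) : ℂ)) := PB.fixed G.as G.aper
  have hν := G.pb_rate 0
  have h := (hν.mul hL hν).add hL (hcst.mul hL ((ha.mul hL hν).add hL (pb'.add hL
    ((hb0.mul hL hb0).add hL ((G.pb_rho 0).mul hL hb0)))))
  obtain ⟨-, C, K, hC, hb⟩ := h
  refine ⟨C, K, hC, fun i z => ?_⟩
  refine le_of_eq_of_le ?_ (hb i z)
  congr 1
  push_cast
  ring

lemma Geo.eikonal {η : ℝ} (hη : 0 < η) (z : ℝ) :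
    ((freq η : ℝ) : ℂ) ^ 2 = ((mom R η z : ℝ) : ℂ) ^ 2 + ((R z : ℂ) ^ 2)⁻¹ := by
  have h1 : freq η ^ 2 = mom R η z ^ 2 + (R z ^ 2)⁻¹ := by
    rw [G.mom_sq hη, freq, Real.sq_sqrt (by linarith)]
    unfold pot; ring
  exact_mod_cast h1

lemma Geo.transport {η : ℝ} (hη : 0 < η) (z : ℝ) :
    ((freq η : ℝ) : ℂ) * ((a z : ℂ) - 2 * ((rate R a η : ℝ) : ℂ))
      = ((deriv (pot R) z * imom R η z / 2 : ℝ) : ℂ)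
        + 2 * ((wkbb R a η z : ℝ) : ℂ) * ((mom R η z : ℝ) : ℂ)
        + ((deriv R z : ℝ) : ℂ) / (R z : ℂ) * ((mom R η z : ℝ) : ℂ) := by
  have h1 : freq η * (a z - 2 * rate R a η)
      = deriv (pot R) z * imom R η z / 2 + 2 * wkbb R a η z * mom R η z
        + deriv R z / R z * mom R η z := by
    have := (G.mom_pos hη z).ne'
    have := (G.Rpos z).ne'
    unfold wkbb imom
    field_simp
    ring
  exact_mod_cast h1

end wkb

/-! ### The lower bound for the decay function -/

/-- The arithmetic behind the choice of the frequency `M ^ J`: the kinetic energy of the quasimode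
dominates the accumulated error. -/
lemma energy_arith {x c C3 E P e T Γ CR A : ℝ} {K1 K2 J : ℕ} (hx : 4 ≤ x)
    (hP : 1 ≤ P) (hJ : J = K1 + K2 + 4) (hT : T ≤ x ^ 2) (hT0 : 0 ≤ T)
    (hΓ : Γ = A * x ^ (K1 + 1)) (hCR : 0 ≤ CR) (hC3 : C3 = 3 * CR * A ^ 2)
    (he : 1 ≤ e ^ 2 * x ^ K2) (hc : 2 * (C3 + 1) ≤ c ^ 2 * x)
    (hE : P * (x ^ J * e * c) ^ 2 ≤ 2 * E + 2 * (3 * T ^ 2 * Γ ^ 2 * (P * CR))) : 1 ≤ E := by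
  have hx1 : 1 ≤ x := by linarith
  set y : ℝ := x ^ (2 * K1 + 6) with hy
  have hy1 : 1 ≤ y := one_le_pow₀ hx1
  have h1 : 3 * T ^ 2 * Γ ^ 2 * (P * CR) ≤ P * C3 * y := by
    have hT2 : T ^ 2 ≤ (x ^ 2) ^ 2 := by gcongr
    calc 3 * T ^ 2 * Γ ^ 2 * (P * CR) ≤ 3 * (x ^ 2) ^ 2 * Γ ^ 2 * (P * CR) := by gcongr
      _ = P * C3 * y := by rw [hΓ, hC3, hy]; ring
  have h2 : c ^ 2 * x * y ≤ (x ^ J * e * c) ^ 2 := by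
    have e1 : (x ^ J * e * c) ^ 2 = c ^ 2 * x ^ (2 * K1 + 7) * x ^ (K2 + 1) * (e ^ 2 * x ^ K2) := by
      rw [hJ]; ring
    have e2 : c ^ 2 * x * y = c ^ 2 * x ^ (2 * K1 + 7) * 1 * 1 := by rw [hy]; ring
    rw [e1, e2]
    gcongr
    exact one_le_pow₀ hx1
  have h3 : 2 * (C3 + 1) * y ≤ (x ^ J * e * c) ^ 2 :=
    (mul_le_mul_of_nonneg_right hc (by linarith)).trans h2
  have h4 : P * (2 * (C3 + 1) * y) ≤ P * (x ^ J * e * c) ^ 2 := by gcongr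
  have h5 : 1 ≤ P * y := one_le_mul_of_one_le_of_one_le hP hy1
  nlinarith

lemma Smooth3.at_zero {U : ℝ → ℝ → ℝ → ℂ} (h : Smooth3 U) : Smooth2 (U 0) := by
  have : ContDiff ℝ (⊤ : ℕ∞) (fun p : ℝ × ℝ => ((0:ℝ), p.1, p.2)) :=
    contDiff_const.prodMk (contDiff_fst.prodMk contDiff_snd)
  exact ContDiff.comp h this

/-- Up to time `log² M`, the decay function is at least an inverse power of `M`. -/
lemma Geo.lower_bound {ε δ : ℝ} {R a : ℝ → ℝ} (G : Geo ε R a) {f : ℝ → ℝ}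
    (hfpos : ∀ t > (0:ℝ), 0 < f t)
    (hexist : ∀ u₀ u₁ : ℝ → ℝ → ℂ, Smooth2 u₀ → Periodic2 u₀ → Smooth2 u₁ → Periodic2 u₁ →
      ∃ u : ℝ → ℝ → ℝ → ℂ, IsWaveSol R a u u₀ u₁)
    (hbound : ∀ u₀ u₁ : ℝ → ℝ → ℂ, Smooth2 u₀ → Periodic2 u₀ → Smooth2 u₁ → Periodic2 u₁ →
      ∀ u : ℝ → ℝ → ℝ → ℂ, IsWaveSol R a u u₀ u₁ →
      ∀ t > (0:ℝ), energy R u t ≤ f t * (hsNormSq (1 + δ) u₀ + hsNormSq δ u₁)) :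
    ∃ M0 : ℕ, 4 ≤ M0 ∧ ∃ C : ℝ, ∃ K : ℕ, 0 ≤ C ∧ ∀ M : ℕ, M0 ≤ M →
      ∀ t > (0:ℝ), t ≤ Real.log M ^ 2 → 1 ≤ f t * (C * (M : ℝ) ^ K) := by
  obtain ⟨b', hb', C2, K1, hC2, hres⟩ := G.residual_bound
  obtain ⟨c, hc, C0, hC0, hB⟩ := G.wkbB_bounds
  obtain ⟨Mr, hMr2, hMr⟩ := G.rate_log
  obtain ⟨CR, hCR0, hCR⟩ := periodic_bounded G.Rs.continuous G.Rper
  obtain ⟨K2, hK2⟩ := exists_nat_ge (2 * (2 * (Real.pi / ε)))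
  obtain ⟨J, hJ⟩ : ∃ J, J = K1 + K2 + 4 := ⟨_, rfl⟩
  obtain ⟨C3, hC3⟩ : ∃ C3, C3 = 3 * CR * (C2 * C0) ^ 2 := ⟨_, rfl⟩
  obtain ⟨M0, hM04, hM0r, hM0c⟩ : ∃ M0 : ℕ, 4 ≤ M0 ∧ Mr ≤ M0 ∧ 2 * (C3 + 1) / c ^ 2 ≤ M0 := by
    refine ⟨max 4 (max ⌈Mr⌉₊ ⌈2 * (C3 + 1) / c ^ 2⌉₊), le_max_left _ _, ?_, ?_⟩
    · exact (Nat.le_ceil _).trans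
        (by exact_mod_cast (le_max_left _ _).trans (le_max_right _ _))
    · exact (Nat.le_ceil _).trans
        (by exact_mod_cast (le_max_right _ _).trans (le_max_right _ _))
  -- the family is indexed by the large integers `M`, with frequency `M ^ J` and `η ≈ 1 / M`
  let κ : Type := {M : ℕ // M0 ≤ M}
  have hx4 : ∀ i : κ, (4:ℝ) ≤ (i.1 : ℝ) := fun i => by exact_mod_cast hM04.trans i.2
  have hx1 : ∀ i : κ, (1:ℝ) ≤ (i.1 : ℝ) := fun i => by linarith [hx4 i]
  have hquant : ∀ i : κ, ∃ η, 1 / (i.1 : ℝ) ≤ η ∧ η ≤ 2 / (i.1 : ℝ) ∧ ∃ n : ℤ,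
      (i.1 : ℝ) ^ J * (∫ z in (0:ℝ)..(2 * Real.pi), mom R η z) = 2 * Real.pi * n := by
    intro i
    refine G.quantize (by linarith [hx4 i]) ?_
    calc 4 * (i.1 : ℝ) ≤ (i.1 : ℝ) * (i.1 : ℝ) := by have := hx4 i; gcongr
      _ = (i.1 : ℝ) ^ 2 := by ring
      _ ≤ _ := pow_le_pow_right₀ (hx1 i) (by omega)
  choose η hη1 hη2 n hn using hquant
  have hηpos : ∀ i, 0 < η i := fun i =>
    lt_of_lt_of_le (by have := hx4 i; positivity) (hη1 i)
  have hηle : ∀ i, η i ≤ 1 := fun i => (hη2 i).trans (by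
    rw [div_le_one (by linarith [hx4 i])]; linarith [hx4 i])
  let φ : κ → Level := fun i => ⟨η i, hηpos i, hηle i⟩
  have hηinv : ∀ i, (η i)⁻¹ ≤ (i.1 : ℝ) := fun i =>
    inv_le_of_inv_le₀ (by linarith [hx4 i]) (by simpa using hη1 i)
  have hL0 : ∀ i : Level, 0 ≤ i.1⁻¹ := fun i => (inv_pos.2 i.2.1).le
  let m : κ → ℤ := fun i => (i.1 : ℤ) ^ J
  have hmr : ∀ i, (m i : ℝ) = (i.1 : ℝ) ^ J := fun i => by simp [m]
  let v : κ → ℝ → ℂ := fun i => wkbv R a (η i) (m i)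
  have hvd : ∀ i z, HasDerivAt (v i) ((((wkbb R a (η i) z : ℝ) : ℂ)
      + Complex.I * (m i) * ((mom R (η i) z : ℝ) : ℂ)) * v i z) z := fun i z => by
    simpa using G.wkbv_deriv (hηpos i) (m i) z
  have hvn : ∀ i z, ‖v i z‖ = Real.exp (wkbB R a (η i) z) := fun i z => norm_wkbv _ _ _ _ _
  have hvper : ∀ i z, v i (z + 2 * Real.pi) = v i z := fun i z =>
    G.wkbv_per (hηpos i) (n := n i) (by rw [hmr]; exact hn i) z
  have hvle : ∀ i z, ‖v i z‖ ≤ C0 * (i.1 : ℝ) := fun i z => by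
    rw [hvn]
    refine ((hB _ (hηpos i) (hηle i) z).2).trans ?_
    have := hηinv i
    gcongr
  have hpm : ∀ k, PB (fun i : κ => (i.1 : ℝ)) k (fun i _ => Complex.I * (m i : ℂ)) := fun k =>
    PB.const _ 1 J zero_le_one (fun i => by
      rw [norm_mul, Complex.norm_I, one_mul, one_mul, ← hmr]
      have : (0:ℝ) ≤ m i := by rw [hmr]; positivity
      rw [show ((m i : ℤ) : ℂ) = ((m i : ℝ) : ℂ) by push_cast; rfl, Complex.norm_real,
        Real.norm_of_nonneg this]) k
  have hpv : ∀ k, PB (fun i : κ => (i.1 : ℝ)) k v := fun k => by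
    refine PB.bootstrap ⟨fun i => continuous_iff_continuousAt.2 fun z => (hvd i z).continuousAt,
      C0, 1, hC0, fun i z => by rw [pow_one]; exact hvle i z⟩ hvd (fun k h => ?_) k
    have h1 := (G.pb_wkbb k).comp φ hL0 hηinv
    have h2 := (G.pb_mom k).comp φ hL0 hηinv
    exact (h1.add hx1 ((hpm k).mul hx1 h2)).mul hx1 h
  let lam : κ → ℂ := fun i =>
    Complex.I * (m i) * ((freq (η i) : ℝ) : ℂ) - ((rate R a (η i) : ℝ) : ℂ)
  have hfreq1 : ∀ i, 1 ≤ freq (η i) := fun i =>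
    Real.one_le_sqrt.2 (by linarith [hηpos i])
  have hlamre : ∀ i, (lam i).re = -rate R a (η i) := fun i => by simp [lam]
  have hlamge : ∀ i, (i.1 : ℝ) ^ J ≤ ‖lam i‖ := fun i => by
    have him : (lam i).im = (m i : ℝ) * freq (η i) := by simp [lam]
    refine le_trans ?_ (Complex.abs_im_le_norm _)
    rw [him, hmr]
    refine le_trans ?_ (le_abs_self _)
    exact le_mul_of_one_le_right (by positivity) (hfreq1 i)
  have hlamle : ∀ i, ‖lam i‖ ≤ 3 * (i.1 : ℝ) ^ J := fun i => by
    have h1 : (1:ℝ) ≤ (i.1 : ℝ) ^ J := one_le_pow₀ (hx1 i)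
    have h2 : ‖((rate R a (η i) : ℝ) : ℂ)‖ ≤ 1 := by
      rw [Complex.norm_real, Real.norm_of_nonneg (G.rate_nonneg (hηpos i))]
      exact G.rate_le (hηpos i)
    have h3 : ‖Complex.I * (m i) * ((freq (η i) : ℝ) : ℂ)‖ ≤ (i.1 : ℝ) ^ J * 2 := by
      rw [norm_mul, norm_mul, Complex.norm_I, one_mul,
        show ((m i : ℤ) : ℂ) = ((m i : ℝ) : ℂ) by push_cast; rfl, Complex.norm_real,
        Complex.norm_real, hmr, Real.norm_of_nonneg (by positivity),
        Real.norm_of_nonneg (by linarith [hfreq1 i])]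
      have := freq_le (hηle i)
      gcongr
    have := norm_sub_le (Complex.I * (m i) * ((freq (η i) : ℝ) : ℂ)) ((rate R a (η i) : ℝ) : ℂ)
    change ‖_ - _‖ ≤ _
    linarith
  have hplv : ∀ k, PB (fun i : κ => (i.1 : ℝ)) k (fun i z => lam i * v i z) := fun k =>
    (PB.const lam 3 J (by norm_num) hlamle k).mul hx1 (hpv k)
  have hmabs : ∀ i, |(m i : ℝ)| ≤ (i.1 : ℝ) ^ J := fun i => by
    rw [hmr, abs_of_nonneg (by positivity)]
  obtain ⟨A0, Q0, hA0, hs0⟩ := sobolev_mode hx1 hpv hvper m J hmabs (1 + δ)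
  obtain ⟨A1, Q1, hA1, hs1⟩ := sobolev_mode hx1 hplv (fun i z => by rw [hvper]) m J hmabs δ
  refine ⟨M0, hM04, A0 + A1, Q0 + Q1, by positivity, fun M hM t ht htM => ?_⟩
  let i : κ := ⟨M, hM⟩
  set U := mode (lam i) (v i) (m i) with hU
  have sU : Smooth3 U := mode_smooth _ (PB.contDiff_top hpv i) _
  have pU : Per3 U := mode_per _ (hvper i) _
  have hU0 : U 0 = fun z (θ : ℝ) => v i z * Complex.exp (Complex.I * ((m i : ℂ) * (θ : ℂ))) := by
    funext z θ; simp [hU, mode]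
  have hU1 : pt U 0
      = fun z (θ : ℝ) => (lam i * v i z) * Complex.exp (Complex.I * ((m i : ℂ) * (θ : ℂ))) := by
    funext z θ
    have h1 : pt U 0 z θ = lam i * U 0 z θ := (pt_mode _ _ _ 0 z θ).deriv
    rw [h1, hU0, mul_assoc]
  obtain ⟨u, hu⟩ := hexist (U 0) (pt U 0) sU.at_zero (pU 0) sU.pt.at_zero (pU.pt 0)
  have hE := hbound (U 0) (pt U 0) sU.at_zero (pU 0) sU.pt.at_zero (pU.pt 0) u hu t ht
  have hxM : (4:ℝ) ≤ (M : ℝ) := hx4 i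
  have hν0 := G.rate_nonneg (hηpos i)
  have hlow : 1 ≤ energy R u t := by
    have hlogM0 : 0 ≤ Real.log M := Real.log_nonneg (by linarith)
    have hlogM : Real.log M ≤ M := (Real.log_le_sub_one_of_pos (by linarith)).trans (by linarith)
    have hkey := energy_lower G.Rs G.Rper G.R1 G.a0 (fun z => (le_abs_self _).trans (hCR z))
      sU pU hu (Γ := (C2 * C0) * (M : ℝ) ^ (K1 + 1))
      (μ := ((M : ℝ) ^ J * Real.exp (-rate R a (η i) * t) * c) ^ 2) ht ?_ ?_
    · refine energy_arith hxM ?_ hJ (htM.trans (by gcongr)) ht.le rfl hCR0 hC3 ?_ ?_ hkey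
      · nlinarith [Real.pi_gt_three]
      · have h1 := hMr M (hM0r.trans (by exact_mod_cast hM)) (η i) (hηpos i) (hη2 i)
        have h2 : rate R a (η i) * t ≤ 2 * (Real.pi / ε) * Real.log M := by
          calc rate R a (η i) * t ≤ rate R a (η i) * Real.log M ^ 2 := by gcongr
            _ = rate R a (η i) * Real.log M * Real.log M := by ring
            _ ≤ _ := by gcongr
        have h3 : (M : ℝ) ^ K2 = Real.exp (K2 * Real.log M) := by
          rw [mul_comm, Real.exp_mul, Real.exp_log (by linarith), Real.rpow_natCast]
        rw [h3, ← Real.exp_nat_mul, ← Real.exp_add]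
        refine Real.one_le_exp ?_
        have h4 := mul_le_mul_of_nonneg_right hK2 hlogM0
        push_cast
        nlinarith
      · have h1 : 2 * (C3 + 1) / c ^ 2 ≤ (M : ℝ) := hM0c.trans (by exact_mod_cast hM)
        rw [div_le_iff₀ (by positivity)] at h1
        linarith
    · intro s hs z θ
      rw [hU]
      rw [mode_residual G.Rs G.R1 (hvd i) (hb' (φ i)) (fun z =>
        (G.mom_deriv (hηpos i) z).ofReal_comp) s z θ (G.eikonal (hηpos i) z)
        (G.transport (hηpos i) z), norm_mul, norm_mode]
      have h1 := hres (φ i) z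
      have h2 : Real.exp ((lam i).re * s) ≤ 1 := by
        rw [hlamre]
        exact Real.exp_le_one_iff.2 (by nlinarith)
      have h3 : ((φ i).1)⁻¹ ^ K1 ≤ (M : ℝ) ^ K1 :=
        pow_le_pow_left₀ (hL0 _) (hηinv i) _
      have h4 := hvle i z
      have h5 : C2 * ((φ i).1)⁻¹ ^ K1 ≤ C2 * (M : ℝ) ^ K1 := by gcongr
      calc _ ≤ (C2 * (M : ℝ) ^ K1) * (1 * (C0 * (M : ℝ))) :=
            mul_le_mul (h1.trans h5) (mul_le_mul h2 h4 (norm_nonneg _) zero_le_one)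
              (by positivity) (by positivity)
        _ = _ := by ring
    · intro z θ
      have h1 : pt U t z θ = lam i * U t z θ := (pt_mode _ _ _ t z θ).deriv
      have h2 := (hB _ (hηpos i) (hηle i) z).1
      have h3 := hlamge i
      rw [h1, norm_mul, hU, norm_mode, hlamre, hvn, ← mul_assoc]
      gcongr
  have hf := hfpos t ht
  rw [hU0, hU1] at hE
  have hx : (1:ℝ) ≤ M := by linarith
  have p0 : (M : ℝ) ^ Q0 ≤ (M : ℝ) ^ (Q0 + Q1) := pow_le_pow_right₀ hx (by omega)
  have p1 : (M : ℝ) ^ Q1 ≤ (M : ℝ) ^ (Q0 + Q1) := pow_le_pow_right₀ hx (by omega)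
  refine (hlow.trans hE).trans ?_
  gcongr
  calc _ ≤ A0 * (M : ℝ) ^ Q0 + A1 * (M : ℝ) ^ Q1 := add_le_add (hs0 i) (hs1 i)
    _ ≤ A0 * (M : ℝ) ^ (Q0 + Q1) + A1 * (M : ℝ) ^ (Q0 + Q1) := by gcongr
    _ = _ := by ring

/-- Choosing `M` comparable with `e^{√t}`. -/
lemma conclude {f : ℝ → ℝ} (hfpos : ∀ t > (0:ℝ), 0 < f t) {M0 K : ℕ} {C : ℝ} (hM0 : 4 ≤ M0)
    (hC : 0 ≤ C) (h : ∀ M : ℕ, M0 ≤ M → ∀ t > (0:ℝ), t ≤ Real.log M ^ 2 →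
      1 ≤ f t * (C * (M : ℝ) ^ K)) :
    ∃ C > (0:ℝ), ∃ c > (0:ℝ), ∀ t > (0:ℝ), C⁻¹ * Real.exp (-c * Real.sqrt t) ≤ f t := by
  refine ⟨C * ((M0 : ℝ) + 1) ^ K + 1, by positivity, (K : ℝ) + 1, by positivity, fun t ht => ?_⟩
  have hs := Real.sqrt_nonneg t
  set E := Real.exp (Real.sqrt t) with hE
  have hE1 : 1 ≤ E := Real.one_le_exp hs
  have hM04 : (4:ℝ) ≤ M0 := by exact_mod_cast hM0
  set M : ℕ := ⌈(M0 : ℝ) * E⌉₊ with hM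
  have g1 : (M0 : ℝ) * E ≤ M := Nat.le_ceil _
  have g2 : (M : ℝ) < (M0 : ℝ) * E + 1 := Nat.ceil_lt_add_one (by positivity)
  have g3 : M0 ≤ M := by
    have : (M0 : ℝ) ≤ M := by nlinarith
    exact_mod_cast this
  have g4 : Real.sqrt t ≤ Real.log M := by
    rw [Real.le_log_iff_exp_le (by nlinarith)]
    nlinarith
  have g5 : t ≤ Real.log M ^ 2 := by
    calc t = Real.sqrt t ^ 2 := (Real.sq_sqrt ht.le).symm
      _ ≤ _ := by gcongr
  have g6 := h M g3 t ht g5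
  have g7 : (M : ℝ) ^ K ≤ ((M0 : ℝ) + 1) ^ K * E ^ K := by
    rw [← mul_pow]
    gcongr
    nlinarith
  have hf := hfpos t ht
  have g8 : C * (M : ℝ) ^ K ≤ (C * ((M0 : ℝ) + 1) ^ K + 1) * E ^ (K + 1) := by
    calc C * (M : ℝ) ^ K ≤ C * (((M0 : ℝ) + 1) ^ K * E ^ K) := by gcongr
      _ = (C * ((M0 : ℝ) + 1) ^ K) * E ^ K := by ring
      _ ≤ (C * ((M0 : ℝ) + 1) ^ K + 1) * E ^ (K + 1) := by
        gcongr
        · linarith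
        · omega
  have g9 : 1 ≤ f t * ((C * ((M0 : ℝ) + 1) ^ K + 1) * E ^ (K + 1)) :=
    g6.trans (by gcongr)
  have g10 : Real.exp (-((K : ℝ) + 1) * Real.sqrt t) = (E ^ (K + 1))⁻¹ := by
    rw [hE, ← Real.exp_nat_mul, ← Real.exp_neg]
    congr 1
    push_cast; ring
  rw [g10, ← mul_inv, inv_le_iff_one_le_mul₀ (by positivity)]
  exact g9

/-- **Theorem 1.**  Let `δ > 0`.  If every pair of smooth initial data on `M`
admits a smooth solution of the damped wave equation and every such solution
satisfies `E(u)(t) ≤ f(t)(‖u₀‖²_{H^{1+δ}} + ‖u₁‖²_{H^δ})`, then there are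
`C, c_δ > 0` with `f(t) ≥ C⁻¹ e^{−c_δ √t}` for all `t > 0`. -/
theorem stmt1
    (δ : ℝ) (hδ : 0 < δ)
    (ε₀ : ℝ) (hε₀ : ε₀ ∈ Set.Ioo (0:ℝ) (1/2))
    (R : ℝ → ℝ) (hRsmooth : ContDiff ℝ (⊤ : ℕ∞) R)
    (hRper : ∀ z, R (z + 2 * Real.pi) = R z)
    (hReven : ∀ z, R (-z) = R z)
    (hRge : ∀ z, 1 ≤ R z)
    (hRquad : ∀ z, |z| ≤ 2 * ε₀ → ((R z) ^ 2)⁻¹ = 1 - z ^ 2)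
    (hRderiv : ∀ z ∈ Set.Ioo (0:ℝ) Real.pi, 0 < deriv R z)
    (a : ℝ → ℝ) (hasmooth : ContDiff ℝ (⊤ : ℕ∞) a)
    (haper : ∀ z, a (z + 2 * Real.pi) = a z)
    (haeven : ∀ z, a (-z) = a z)
    (harange : ∀ z, a z ∈ Set.Icc (0:ℝ) 1)
    (hazero : ∀ z, |z| ≤ 2 * ε₀ → a z = 0)
    (haone : ∀ z, 3 * ε₀ ≤ |z| → |z| ≤ Real.pi → a z = 1)
    (f : ℝ → ℝ) (hfpos : ∀ t > (0:ℝ), 0 < f t)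
    (hexist : ∀ u₀ u₁ : ℝ → ℝ → ℂ, Smooth2 u₀ → Periodic2 u₀ → Smooth2 u₁ → Periodic2 u₁ →
      ∃ u : ℝ → ℝ → ℝ → ℂ, IsWaveSol R a u u₀ u₁)
    (hbound : ∀ u₀ u₁ : ℝ → ℝ → ℂ, Smooth2 u₀ → Periodic2 u₀ → Smooth2 u₁ → Periodic2 u₁ →
      ∀ u : ℝ → ℝ → ℝ → ℂ, IsWaveSol R a u u₀ u₁ →
      ∀ t > (0:ℝ), energy R u t ≤ f t * (hsNormSq (1 + δ) u₀ + hsNormSq δ u₁)) :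
    ∃ C > (0:ℝ), ∃ c > (0:ℝ), ∀ t > (0:ℝ), C⁻¹ * Real.exp (-c * Real.sqrt t) ≤ f t := by
  have G : Geo ε₀ R a :=
    Geo.mk' hε₀ hRsmooth hRper hReven hRge hRquad hRderiv hasmooth haper harange hazero
  obtain ⟨M0, hM0, C, K, hC, h⟩ := G.lower_bound hfpos hexist hbound
  exact conclude hfpos hM0 hC h

end
end

section
/- Let n ≥ 1, let Ω ⊂ ℝⁿ be compact, let b : Ω → ℝ be continuous with b ≥ 0, and let K ⊂ Ω × ℝⁿ be compact with K ∩ { (x,ξ) : |ξ|² = 1 and b(x) = 0 } = ∅. Then there exist a smooth, compactly supported function χ : ℝⁿ × ℝⁿ → [0, ∞) whose support is disjoint from K, and a constant C > 0, such that for all (x, ξ) ∈ Ω × ℝⁿ: | (|ξ|² − 1) + i (b(x) + χ(x,ξ)) |ξ|² | ≥ (1 + |ξ|²)/C. -/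
open Real

/-!
The symbol `(|ξ|² − 1) + i (b + χ) |ξ|²` with `b, χ ≥ 0` vanishes only if `|ξ|² = 1` and
`b = χ = 0`. The characteristic set `Z = {|ξ|² = 1, b = 0}` over `Ω` is compact and misses `K`, so
there is a smooth bump `χ` equal to `1` on `Z`, supported in a compact set disjoint from `K`
(`exists_smooth_cutoff`). The symbol then has no zero on the compact set `Ω × {|ξ| ≤ 2}`, so its
modulus is bounded below there by some `m > 0`; for `|ξ| > 2` the real part alone is at least
`(1 + |ξ|²) / 2`.
-/

/-- Smooth Urysohn lemma for a compact set `Z` and a disjoint closed set `K`, with the topological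
support, and not merely the support, kept away from `K`. -/
theorem exists_smooth_cutoff {E : Type*} [NormedAddCommGroup E] [NormedSpace ℝ E]
    [FiniteDimensional ℝ E] {Z K : Set E} (hZ : IsCompact Z) (hK : IsClosed K)
    (hZK : Disjoint Z K) :
    ∃ χ : E → ℝ, ContDiff ℝ (⊤ : ℕ∞) χ ∧ HasCompactSupport χ ∧ (∀ p, 0 ≤ χ p) ∧
      Disjoint (tsupport χ) K ∧ ∀ p ∈ Z, χ p = 1 := by
  have : ProperSpace E := FiniteDimensional.proper_real E
  obtain ⟨L, hL, hZL, hLK⟩ := exists_compact_between hZ hK.isOpen_compl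
    (Set.subset_compl_iff_disjoint_right.2 hZK)
  obtain ⟨f, hf, hfr, hfs, hf1⟩ := exists_contMDiff_support_eq_eq_one_iff (n := (⊤ : ℕ∞))
    (modelWithCornersSelf ℝ E) isOpen_interior hZ.isClosed hZL
  have hsupp : tsupport f ⊆ L :=
    closure_minimal (hfs.subset.trans interior_subset) hL.isClosed
  exact ⟨f, hf.contDiff, hL.of_isClosed_subset (isClosed_tsupport f) hsupp,
    fun p => (hfr (Set.mem_range_self p)).1,
    Set.subset_compl_iff_disjoint_right.1 (hsupp.trans hLK), fun p hp => (hf1 p).1 hp⟩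

/-- **Elliptic estimate for the overdamped symbol.**  Let `Ω ⊂ ℝⁿ` be compact,
`b : Ω → [0,∞)` continuous, and `K ⊂ Ω × ℝⁿ` compact and disjoint from the
characteristic set `{|ξ|² = 1, b = 0}`.  Then there are a smooth compactly
supported nonnegative `χ` with support disjoint from `K`, and `C > 0`, such
that `|(|ξ|² − 1) + i(b(x) + χ(x,ξ))|ξ|²| ≥ (1 + |ξ|²)/C` on `Ω × ℝⁿ`. -/
theorem stmt13
    (n : ℕ) (hn : 1 ≤ n)
    (Ω : Set (EuclideanSpace ℝ (Fin n))) (hΩ : IsCompact Ω)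
    (b : EuclideanSpace ℝ (Fin n) → ℝ)
    (hb : ContinuousOn b Ω) (hbnn : ∀ x ∈ Ω, 0 ≤ b x)
    (K : Set (EuclideanSpace ℝ (Fin n) × EuclideanSpace ℝ (Fin n)))
    (hK : IsCompact K) (hKΩ : K ⊆ Ω ×ˢ (Set.univ : Set (EuclideanSpace ℝ (Fin n))))
    (hKchar : K ∩ {p : EuclideanSpace ℝ (Fin n) × EuclideanSpace ℝ (Fin n) |
        ‖p.2‖ ^ 2 = 1 ∧ b p.1 = 0} = ∅) :
    ∃ χ : EuclideanSpace ℝ (Fin n) × EuclideanSpace ℝ (Fin n) → ℝ,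
      ContDiff ℝ (⊤ : ℕ∞) χ ∧
      HasCompactSupport χ ∧
      (∀ p, 0 ≤ χ p) ∧
      Disjoint (tsupport χ) K ∧
      ∃ C > (0:ℝ), ∀ x ∈ Ω, ∀ ξ : EuclideanSpace ℝ (Fin n),
        (1 + ‖ξ‖ ^ 2) / C ≤
          ‖(((‖ξ‖ ^ 2 - 1 : ℝ) : ℂ)
            + Complex.I * (((b x + χ (x, ξ)) * ‖ξ‖ ^ 2 : ℝ) : ℂ))‖ := by
  -- The part of the characteristic set lying over `Ω`; there `|ξ|² = 1` reads `|ξ| = 1`.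
  set Z : Set (EuclideanSpace ℝ (Fin n) × EuclideanSpace ℝ (Fin n)) :=
    (Ω ∩ b ⁻¹' {0}) ×ˢ Metric.sphere 0 1 with hZdef
  have hZ : IsCompact Z :=
    (hΩ.of_isClosed_subset (hb.preimage_isClosed_of_isClosed hΩ.isClosed isClosed_singleton)
      Set.inter_subset_left).prod (isCompact_sphere 0 1)
  have hZK : Disjoint Z K := by
    rw [Set.disjoint_left]
    rintro p ⟨⟨-, hp0⟩, hp1⟩ hpK
    have h : p ∈ (∅ : Set (EuclideanSpace ℝ (Fin n) × EuclideanSpace ℝ (Fin n))) := by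
      rw [← hKchar]
      exact ⟨hpK, by rw [mem_sphere_zero_iff_norm.1 hp1, one_pow], hp0⟩
    exact h
  obtain ⟨χ, hχ, hχc, hχ0, hχK, hχ1⟩ := exists_smooth_cutoff hZ hK.isClosed hZK
  refine ⟨χ, hχ, hχc, hχ0, hχK, ?_⟩
  have hcont : ContinuousOn (fun p : EuclideanSpace ℝ (Fin n) × EuclideanSpace ℝ (Fin n) =>
      ‖(((‖p.2‖ ^ 2 - 1 : ℝ) : ℂ)
        + Complex.I * (((b p.1 + χ p) * ‖p.2‖ ^ 2 : ℝ) : ℂ))‖)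
      (Ω ×ˢ Metric.closedBall 0 2) := by
    have h1 : ContinuousOn (fun p : EuclideanSpace ℝ (Fin n) × EuclideanSpace ℝ (Fin n) => b p.1)
        (Ω ×ˢ Metric.closedBall 0 2) :=
      hb.comp continuous_fst.continuousOn fun p hp => hp.1
    have h2 := hχ.continuous
    have h3 : ContinuousOn (fun p : EuclideanSpace ℝ (Fin n) × EuclideanSpace ℝ (Fin n) =>
        (b p.1 + χ p) * ‖p.2‖ ^ 2) (Ω ×ˢ Metric.closedBall 0 2) :=
      (h1.add h2.continuousOn).mul (by fun_prop)
    exact ((Complex.continuous_ofReal.comp (by fun_prop)).continuousOn.add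
      (continuousOn_const.mul (Complex.continuous_ofReal.comp_continuousOn h3))).norm
  obtain ⟨m, hm, hmle⟩ := (hΩ.prod (isCompact_closedBall 0 2)).exists_forall_le' hcont
    (a := 0) (by
      rintro ⟨x, ξ⟩ ⟨hx, -⟩
      refine norm_pos_iff.2 fun h0 => ?_
      have hre := congrArg Complex.re h0
      have him := congrArg Complex.im h0
      simp only [Complex.add_re, Complex.add_im, Complex.mul_re, Complex.mul_im, Complex.I_re,
        Complex.I_im, Complex.ofReal_re, Complex.ofReal_im, Complex.zero_re, Complex.zero_im]
        at hre him
      have hξ : ‖ξ‖ ^ 2 = 1 := by linarith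
      rw [hξ] at him
      have hbx := hbnn x hx
      have hχx := hχ0 (x, ξ)
      have hmem : (x, ξ) ∈ Z :=
        ⟨⟨hx, show b x = 0 by linarith⟩, mem_sphere_zero_iff_norm.2
          ((pow_eq_one_iff_of_nonneg (norm_nonneg ξ) two_ne_zero).1 hξ)⟩
      linarith [hχ1 _ hmem])
  -- `2` serves the region `|ξ| > 2`, and `5 / m` serves `|ξ| ≤ 2`, where `1 + |ξ|² ≤ 5`.
  refine ⟨2 + 5 / m, by positivity, fun x hx ξ => ?_⟩
  have hm5 : 0 < 5 / m := by positivity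
  rw [div_le_iff₀ (by positivity)]
  rcases le_or_gt ‖ξ‖ 2 with hξ | hξ
  · have hle := hmle (x, ξ) ⟨hx, mem_closedBall_zero_iff.2 hξ⟩
    have h5 : m * (5 / m) = 5 := by field_simp
    calc 1 + ‖ξ‖ ^ 2 ≤ m * (2 + 5 / m) := by nlinarith [norm_nonneg ξ]
      _ ≤ _ := by gcongr
  · have hre := (le_abs_self _).trans (Complex.abs_re_le_norm (((‖ξ‖ ^ 2 - 1 : ℝ) : ℂ)
        + Complex.I * (((b x + χ (x, ξ)) * ‖ξ‖ ^ 2 : ℝ) : ℂ)))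
    simp only [Complex.add_re, Complex.mul_re, Complex.I_re, Complex.I_im, Complex.ofReal_re,
      Complex.ofReal_im, zero_mul, mul_zero, sub_zero, add_zero] at hre
    calc 1 + ‖ξ‖ ^ 2 ≤ (‖ξ‖ ^ 2 - 1) * 2 := by nlinarith
      _ ≤ (‖ξ‖ ^ 2 - 1) * (2 + 5 / m) := by
        have : 0 ≤ ‖ξ‖ ^ 2 - 1 := by nlinarith
        gcongr
        linarith
      _ ≤ _ := by gcongr
end

section
/- Let c > 0, C₀ > 0, δ > 0, ε ∈ (0, 1/2), and let f : (0, ∞) → (0, ∞). Suppose there is a sequence (T_j) of reals with T_j ≥ 10 for all j, T_j → ∞, and T_{j+1} ≤ T_j² for all j, such that for every j and every t > 0: T_j² e^{−2ct/ log T_j} − C₀ T_j^{2ε} log² T_j ≤ T_j^{2 + 2δ} f(t). Then there exist constants c' > 0 and t₀ > 0 such that f(t) ≥ e^{−c' √t} for all t ≥ t₀. -/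
/-!
Write `L = log T_j`; the hypothesis then reads
`exp (2L - 2ct/L) - C₀ exp (2εL) L² ≤ exp ((2+2δ)L) f(t)`. The choice of `j` that balances the two
terms in the first exponent is the one with `L` comparable to `√t`. Such a `j` exists because
`L` at most doubles from one index to the next (`exists_mem_Icc_two_mul`): for large `s`, the
first `L ≥ s` also satisfies `L ≤ 2s`. With `s = 2√c √t` one gets `2ct/L ≤ L/2`, so the leading
term is at least `exp (3L/2)` and dominates the error, which is at most `C₀ exp L · L²` because
`ε < 1/2`. Hence `f(t) ≥ exp (-(2+2δ)L)`, and `L ≤ 4√c √t` gives the claim.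
-/

open Real Filter

/-- A sequence tending to infinity that at most doubles at each step meets every interval
`[s, 2s]` with `s` nonnegative and beyond its first term. -/
lemma exists_mem_Icc_two_mul {L : ℕ → ℝ} (htop : Tendsto L atTop atTop)
    (hdouble : ∀ j, L (j + 1) ≤ 2 * L j) {s : ℝ} (hs : 0 ≤ s) (h0 : L 0 ≤ s) :
    ∃ j, s ≤ L j ∧ L j ≤ 2 * s := by
  classical
  have hex : ∃ j, s ≤ L j := (htop.eventually_ge_atTop s).exists
  refine ⟨Nat.find hex, Nat.find_spec hex, ?_⟩
  rcases hj : Nat.find hex with _ | k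
  · linarith
  · have hk : ¬ s ≤ L k := Nat.find_min hex (by omega)
    linarith [hdouble k]

/-- Polynomial growth loses to exponential growth, in the form that absorbs the error term into
half of the leading term. -/
lemma exists_mul_sq_le_exp_half (C : ℝ) :
    ∃ M : ℝ, ∀ L ≥ M, C * L ^ 2 ≤ exp (L / 2) / 2 := by
  have h := (isLittleO_pow_exp_pos_mul_atTop 2 (b := 1 / 2) (by norm_num)).const_mul_left C
  obtain ⟨M, hM⟩ := eventually_atTop.1 (h.bound (c := 1 / 2) (by norm_num))
  refine ⟨M, fun L hL => ?_⟩
  have h1 := (le_abs_self _).trans (hM L hL)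
  rw [Real.norm_eq_abs, abs_of_pos (exp_pos _), show 1 / 2 * L = L / 2 by ring] at h1
  linarith

/-- **Final optimization step.**  Suppose `f : (0,∞) → (0,∞)` and there is a
sequence `T_j ≥ 10`, `T_j → ∞`, `T_{j+1} ≤ T_j²`, with
`T_j² e^{−2ct/log T_j} − C₀ T_j^{2ε} log² T_j ≤ T_j^{2+2δ} f(t)` for all `j`
and `t > 0`.  Then there are `c' > 0` and `t₀ > 0` such that
`f(t) ≥ e^{−c'√t}` for all `t ≥ t₀`. -/
theorem stmt16
    (c C₀ δ ε : ℝ) (hc : 0 < c) (hC₀ : 0 < C₀) (hδ : 0 < δ)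
    (hε : ε ∈ Set.Ioo (0:ℝ) (1/2))
    (f : ℝ → ℝ) (hf : ∀ t > (0:ℝ), 0 < f t)
    (T : ℕ → ℝ)
    (hT10 : ∀ j, 10 ≤ T j)
    (hTtop : Tendsto T atTop atTop)
    (hTsq : ∀ j, T (j + 1) ≤ (T j) ^ 2)
    (key : ∀ j, ∀ t > (0:ℝ),
      (T j) ^ 2 * Real.exp (-2 * c * t / Real.log (T j))
          - C₀ * (T j) ^ (2 * ε) * (Real.log (T j)) ^ 2
        ≤ (T j) ^ (2 + 2 * δ) * f t) :
    ∃ c' > (0:ℝ), ∃ t₀ > (0:ℝ), ∀ t ≥ t₀, Real.exp (-c' * Real.sqrt t) ≤ f t := by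
  obtain ⟨M, hM⟩ := exists_mul_sq_le_exp_half C₀
  have hTpos : ∀ j, 0 < T j := fun j => by linarith [hT10 j]
  have hLtop : Tendsto (fun j => log (T j)) atTop atTop := tendsto_log_atTop.comp hTtop
  have hLdouble : ∀ j, log (T (j + 1)) ≤ 2 * log (T j) := fun j => by
    have h := log_le_log (hTpos (j + 1)) (hTsq j)
    rwa [log_pow, Nat.cast_ofNat] at h
  have ha : 0 < 2 * √c := by positivity
  set a := 2 * √c with ha_def
  have ha2 : a ^ 2 = 4 * c := by rw [ha_def, mul_pow, sq_sqrt hc.le]; norm_num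
  set K := max 1 (max M (log (T 0))) with hK
  have hK1 : 1 ≤ K := le_max_left _ _
  have hKM : M ≤ K := (le_max_left _ _).trans (le_max_right _ _)
  have hK0 : log (T 0) ≤ K := (le_max_right _ _).trans (le_max_right _ _)
  refine ⟨(2 + 2 * δ) * (2 * a), by positivity, (K / a) ^ 2, by positivity, fun t ht => ?_⟩
  have ht0 : 0 < t := lt_of_lt_of_le (by positivity) ht
  have hs : K ≤ a * √t := by
    have h := (div_le_iff₀ ha).1 (le_sqrt_of_sq_le ht)
    linarith
  obtain ⟨j, hj1, hj2⟩ :=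
    exists_mem_Icc_two_mul hLtop hLdouble (s := a * √t) (by positivity) (hK0.trans hs)
  have hk := key j t ht0
  simp only [rpow_def_of_pos (hTpos j)] at hk
  rw [show T j ^ 2 = exp (2 * log (T j)) by
    rw [two_mul, exp_add, exp_log (hTpos j), sq], ← exp_add] at hk
  set L := log (T j)
  have hL1 : 1 ≤ L := by linarith
  have hquot : 2 * c * t / L ≤ L / 2 := by
    rw [div_le_iff₀ (by linarith)]
    have h := pow_le_pow_left₀ (by positivity) hj1 2
    rw [mul_pow, ha2, sq_sqrt ht0.le] at h
    linarith
  have hmain : exp (3 / 2 * L) ≤ exp (2 * L + -2 * c * t / L) := by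
    refine exp_le_exp.2 ?_
    rw [show -2 * c * t / L = -(2 * c * t / L) by ring]
    linarith
  have herr : C₀ * exp (L * (2 * ε)) * L ^ 2 ≤ exp (3 / 2 * L) / 2 := by
    have h1 : exp (L * (2 * ε)) ≤ exp L := exp_le_exp.2 (by nlinarith [hε.2])
    calc C₀ * exp (L * (2 * ε)) * L ^ 2 = exp (L * (2 * ε)) * (C₀ * L ^ 2) := by ring
      _ ≤ exp L * (exp (L / 2) / 2) :=
        mul_le_mul h1 (hM L (by linarith)) (by positivity) (exp_pos _).le
      _ = exp (3 / 2 * L) / 2 := by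
        rw [← mul_div_assoc, ← exp_add]; congr 2; ring
  have hone : 1 ≤ exp (L * (2 + 2 * δ)) * f t := by
    linarith [add_one_le_exp (3 / 2 * L)]
  calc exp (-((2 + 2 * δ) * (2 * a)) * √t) ≤ exp (-(L * (2 + 2 * δ))) := by
        refine exp_le_exp.2 ?_
        have := mul_le_mul_of_nonneg_right hj2 (by positivity : 0 ≤ 2 + 2 * δ)
        linarith
    _ ≤ f t := by
        rw [exp_neg, inv_le_iff_one_le_mul₀' (exp_pos _)]
        exact hone
end
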